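/- arXiv:1208.5361 — 2 statements merged into one kernel-verified Lean document; each statement's English description precedes it below -/
import Mathlib

section
/- Let n ≥ 1 and let f : ℝⁿ → ℝ be a smooth convex function with f(0) = 0, ∇f(0) = 0, and positive definite Hessian D²f(0). Then lim_{t → 0⁺} t^{-(n+2)/2} · ∫_{{x : f(x) < t}} (t − f(x)) dx = (√2)^{n+2} · ω_n / ((n+2) · √(det D²f(0))). -/
open MeasureTheory Filter
open scoped RealInnerProductSpace Topology

/-- The Hessian matrix of `f : ℝⁿ → ℝ` at a point `x`, with entries the second
partial derivatives of `f`. -/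
noncomputable def hessianMatrix {n : ℕ} (f : EuclideanSpace ℝ (Fin n) → ℝ)
    (x : EuclideanSpace ℝ (Fin n)) : Matrix (Fin n) (Fin n) ℝ :=
  Matrix.of fun i j =>
    iteratedFDeriv ℝ 2 f x ![EuclideanSpace.single i 1, EuclideanSpace.single j 1]

/-!
Put `q x = ⟪x, D²f(0) x⟫ / 2`. Under the parabolic rescaling `x = s y` with `t = s²`, the integral
becomes `s ^ (n + 2)` times the integral of the positive part of `1 - f (s y) / s²`, and
`f (s y) / s² → q y` pointwise by Taylor expansion at the critical point `0`. Near the origin `f`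
dominates a multiple `c ‖x‖²`, and away from it convexity keeps `f` above a positive constant, so
for small `s` these integrands are dominated by the positive part of `1 - c ‖y‖²`. The limit is
therefore the volume of the cap of height `1` of the paraboloid `q`. By homogeneity and Cavalieri's
principle this is `2 / (n + 2)` times the volume `√2 ^ n ω_n / √(det D²f(0))` of the ellipsoid
`q < 1`.
-/

/-- Positive homogeneity of degree `p`; the scaling factor `0` is included. -/
def IsPosHomogeneous {E : Type*} [AddCommGroup E] [Module ℝ E] (q : E → ℝ) (p : ℕ) : Prop :=
  ∀ ⦃s : ℝ⦄, 0 ≤ s → ∀ x, q (s • x) = s ^ p * q x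

/-- The volume of the region between the graph of `f` and the horizontal hyperplane at height `t`.
It takes the junk value `0` if `t - f` is not integrable on the sublevel set. -/
noncomputable def capVolume {α : Type*} [MeasurableSpace α] (μ : Measure α) (f : α → ℝ) (t : ℝ) :
    ℝ :=
  ∫ x in {x | f x < t}, (t - f x) ∂μ

theorem capVolume_eq_integral_max {α : Type*} [MeasurableSpace α] (μ : Measure α) {f : α → ℝ}
    (hf : Measurable f) (t : ℝ) : capVolume μ f t = ∫ x, max (t - f x) 0 ∂μ := by
  rw [capVolume, ← integral_indicator (measurableSet_lt hf measurable_const)]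
  congr 1 with x
  by_cases hx : f x < t
  · rw [Set.indicator_of_mem (by exact hx), max_eq_left (sub_nonneg.2 hx.le)]
  · rw [Set.indicator_of_notMem (by exact hx), max_eq_right (sub_nonpos.2 (not_lt.1 hx))]

theorem capVolume_eq_intervalIntegral {α : Type*} [MeasurableSpace α] (μ : Measure α) {q : α → ℝ}
    (hqm : Measurable q) (hq0 : ∀ x, 0 ≤ q x) {t : ℝ} (ht : 0 ≤ t)
    (hint : Integrable (fun x => max (t - q x) 0) μ) :
    capVolume μ q t = ∫ u in (0 : ℝ)..t, μ.real {x | q x < u} := by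
  have hslice (s : ℝ) (hs : 0 < s) : {x | s < max (t - q x) 0} = {x | q x < t - s} := by
    ext x
    simp [hs.not_gt, lt_sub_comm]
  have hempty (s : ℝ) (hs : t < s) : {x | q x < t - s} = ∅ :=
    Set.eq_empty_of_forall_notMem fun x (hx : q x < t - s) => by linarith [hq0 x]
  rw [capVolume_eq_integral_max μ hqm,
    hint.integral_eq_integral_meas_lt (.of_forall fun x => le_max_right _ _)]
  calc ∫ s in Set.Ioi 0, μ.real {x | s < max (t - q x) 0}
      = ∫ s in Set.Ioi 0, μ.real {x | q x < t - s} :=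
        setIntegral_congr_fun measurableSet_Ioi fun s hs => by simp only [hslice s hs]
    _ = ∫ s in Set.Ioc 0 t, μ.real {x | q x < t - s} := by
        refine setIntegral_eq_of_subset_of_forall_sdiff_eq_zero measurableSet_Ioi
          Set.Ioc_subset_Ioi_self fun s hs => ?_
        rw [hempty s (not_le.1 fun hst => hs.2 ⟨hs.1, hst⟩), measureReal_empty]
    _ = ∫ u in (0 : ℝ)..t, μ.real {x | q x < u} := by
        rw [← intervalIntegral.integral_of_le ht,
          intervalIntegral.integral_comp_sub_left (fun u => μ.real {x | q x < u}),
          sub_self, sub_zero]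

theorem eventually_mul_norm_pow_le_of_lt {E : Type*} [NormedAddCommGroup E] {f q : E → ℝ} {p : ℕ}
    {c c' : ℝ} (hc : c' < c) (hcq : ∀ x, c * ‖x‖ ^ p ≤ q x)
    (hfq : (fun x => f x - q x) =o[𝓝 0] fun x => ‖x‖ ^ p) :
    ∀ᶠ x in 𝓝 0, c' * ‖x‖ ^ p ≤ f x := by
  filter_upwards [hfq.bound (sub_pos.2 hc)] with x hx
  rw [Real.norm_eq_abs, norm_pow, norm_norm] at hx
  linarith [(abs_le.1 hx).1, hcq x]

section Growth

variable {E : Type*} [NormedAddCommGroup E] [NormedSpace ℝ E] {f q : E → ℝ} {p : ℕ} {c : ℝ}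

theorem IsPosHomogeneous.exists_mul_norm_pow_le [FiniteDimensional ℝ E]
    (hq : IsPosHomogeneous q p) (hp : p ≠ 0) (hcont : Continuous q) (hpos : ∀ x ≠ 0, 0 < q x) :
    ∃ c > 0, ∀ x, c * ‖x‖ ^ p ≤ q x := by
  obtain ⟨c, hc, hsphere⟩ := (isCompact_sphere (0 : E) 1).exists_forall_le'
    hcont.continuousOn fun u hu => hpos u (ne_zero_of_mem_unit_sphere ⟨u, hu⟩)
  refine ⟨c, hc, fun x => ?_⟩
  rcases eq_or_ne x 0 with rfl | hx
  · simpa [hp] using (hq le_rfl (0 : E)).ge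
  · have hunit : ‖x‖⁻¹ • x ∈ Metric.sphere (0 : E) 1 := by simp [norm_smul, hx]
    calc c * ‖x‖ ^ p ≤ q (‖x‖⁻¹ • x) * ‖x‖ ^ p := by gcongr; exact hsphere _ hunit
      _ = q x := by rw [mul_comm, ← hq (norm_nonneg x), smul_inv_smul₀ (norm_ne_zero_iff.2 hx)]

theorem IsPosHomogeneous.tendsto_div_pow (hq : IsPosHomogeneous q p)
    (hfq : (fun x => f x - q x) =o[𝓝 0] fun x => ‖x‖ ^ p) (y : E) :
    Tendsto (fun s : ℝ => f (s • y) / s ^ p) (𝓝[>] 0) (𝓝 (q y)) := by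
  have hsmul : Tendsto (fun s : ℝ => s • y) (𝓝[>] 0) (𝓝 0) :=
    (Continuous.tendsto' (by fun_prop) 0 0 (zero_smul ℝ y)).mono_left nhdsWithin_le_nhds
  have hrem : (fun s : ℝ => f (s • y) - q (s • y)) =o[𝓝[>] 0] fun s : ℝ => s ^ p :=
    (hfq.comp_tendsto hsmul).trans_isBigO <| .of_bound (‖y‖ ^ p) <| .of_forall fun s => by
      simp [norm_smul, mul_pow, mul_comm]
  have hlim := hrem.tendsto_div_nhds_zero.add_const (q y)
  rw [zero_add] at hlim
  refine hlim.congr' ?_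
  filter_upwards [self_mem_nhdsWithin] with s (hs : 0 < s)
  rw [hq hs.le]
  field_simp
  ring

theorem eventually_max_one_sub_div_pow_le (hp : p ≠ 0)
    (hnear : ∀ᶠ x in 𝓝 0, c * ‖x‖ ^ p ≤ f x)
    (hfar : ∀ δ > 0, ∃ ε > 0, ∀ x, δ ≤ ‖x‖ → ε ≤ f x) :
    ∀ᶠ s : ℝ in 𝓝[>] 0, ∀ y, max (1 - f (s • y) / s ^ p) 0 ≤ max (1 - c * ‖y‖ ^ p) 0 := by
  obtain ⟨δ, hδ, hnear⟩ := Metric.eventually_nhds_iff.1 hnear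
  obtain ⟨ε, hε, hfar⟩ := hfar δ hδ
  have hpow : Tendsto (fun s : ℝ => s ^ p) (𝓝[>] 0) (𝓝 0) :=
    ((continuous_pow p).tendsto' 0 0 (zero_pow hp)).mono_left nhdsWithin_le_nhds
  filter_upwards [hpow.eventually_lt_const hε, self_mem_nhdsWithin] with s hsε (hs : 0 < s) y
  rcases lt_or_ge ‖s • y‖ δ with hsmall | hlarge
  · gcongr
    rw [le_div_iff₀ (by positivity)]
    calc c * ‖y‖ ^ p * s ^ p = c * ‖s • y‖ ^ p := by rw [norm_smul_of_nonneg hs.le]; ring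
      _ ≤ f (s • y) := hnear (by rwa [dist_zero_right])
  · refine max_le ((sub_nonpos.2 ?_).trans (le_max_right _ _)) (le_max_right _ _)
    exact (one_le_div (by positivity)).2 (hsε.le.trans (hfar _ hlarge))

theorem exists_pos_forall_le_of_convexOn_of_eventually_le (hconv : ConvexOn ℝ Set.univ f)
    (hf0 : f 0 ≤ 0) (hc : 0 < c) (hnear : ∀ᶠ x in 𝓝 0, c * ‖x‖ ^ p ≤ f x) :
    ∀ δ > 0, ∃ ε > 0, ∀ x, δ ≤ ‖x‖ → ε ≤ f x := by
  intro δ hδ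
  obtain ⟨δ₀, hδ₀, hnear⟩ := Metric.eventually_nhds_iff.1 hnear
  obtain ⟨r, hr, hrmin⟩ := exists_between (lt_min hδ hδ₀)
  refine ⟨c * r ^ p, by positivity, fun x hx => ?_⟩
  by_contra! hlt
  -- The convex sublevel set at height `c * r ^ p` contains `0` and `x`, but cannot meet the sphere
  -- of radius `r` between them.
  have hrx : r ≤ ‖x‖ := (hrmin.le.trans (min_le_left _ _)).trans hx
  have hx0 : 0 < ‖x‖ := hr.trans_le hrx
  have hnorm : ‖(r / ‖x‖) • x‖ = r := by
    rw [norm_smul_of_nonneg (by positivity), div_mul_cancel₀ _ hx0.ne']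
  have hmem : (r / ‖x‖) • x ∈ {x ∈ Set.univ | f x < c * r ^ p} :=
    (hconv.convex_lt (c * r ^ p)).smul_mem_of_zero_mem ⟨trivial, hf0.trans_lt (by positivity)⟩
      ⟨trivial, hlt⟩ ⟨by positivity, (div_le_one hx0).2 hrx⟩
  have hle := hnear (y := (r / ‖x‖) • x)
    (by rw [dist_zero_right, hnorm]; exact hrmin.trans_le (min_le_right _ _))
  rw [hnorm] at hle
  exact hle.not_gt hmem.2

theorem IsPosHomogeneous.exists_pos_forall_le_of_convexOn [FiniteDimensional ℝ E]
    (hq : IsPosHomogeneous q p) (hp : p ≠ 0) (hqc : Continuous q) (hpos : ∀ x ≠ 0, 0 < q x)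
    (hconv : ConvexOn ℝ Set.univ f) (hfq : (fun x => f x - q x) =o[𝓝 0] fun x => ‖x‖ ^ p) :
    ∀ δ > 0, ∃ ε > 0, ∀ x, δ ≤ ‖x‖ → ε ≤ f x := by
  obtain ⟨c, hc, hcq⟩ := hq.exists_mul_norm_pow_le hp hqc hpos
  have hq0 : q 0 = 0 := by simpa [hp] using hq le_rfl (0 : E)
  have hf0 : f 0 = 0 := by simpa [hp, hq0] using (hfq.bound zero_lt_one).self_of_nhds
  exact exists_pos_forall_le_of_convexOn_of_eventually_le hconv hf0.le (half_pos hc)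
    (eventually_mul_norm_pow_le_of_lt (half_lt_self hc) hcq hfq)

end Growth

section Rescaling

open scoped Pointwise

variable {E : Type*} [NormedAddCommGroup E] [NormedSpace ℝ E] [FiniteDimensional ℝ E]
  [MeasurableSpace E] [BorelSpace E] {f q : E → ℝ} {p : ℕ} {c : ℝ}

theorem integrable_max_one_sub_mul_norm_pow (μ : Measure E) [IsFiniteMeasureOnCompacts μ]
    (hp : p ≠ 0) (hc : 0 < c) : Integrable (fun x => max (1 - c * ‖x‖ ^ p) 0) μ := by
  refine Continuous.integrable_of_hasCompactSupport (by fun_prop)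
    (.of_support_subset_isCompact (isCompact_closedBall 0 (max 1 c⁻¹)) fun x hx => ?_)
  contrapose! hx
  rw [mem_closedBall_zero_iff, not_le, max_lt_iff] at hx
  rw [Function.notMem_support, max_eq_right_iff, sub_nonpos]
  calc 1 = c * c⁻¹ := (mul_inv_cancel₀ hc.ne').symm
    _ ≤ c * ‖x‖ ^ p := by gcongr; exact hx.2.le.trans (le_self_pow₀ hx.1.le hp)

theorem tendsto_capVolume_comp_smul_div_pow (μ : Measure E) [IsFiniteMeasureOnCompacts μ]
    (hf : Measurable f) (hp : p ≠ 0) (hq : IsPosHomogeneous q p) (hqm : Measurable q) (hc : 0 < c)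
    (hcq : ∀ x, c * ‖x‖ ^ p ≤ q x) (hfq : (fun x => f x - q x) =o[𝓝 0] fun x => ‖x‖ ^ p)
    (hfar : ∀ δ > 0, ∃ ε > 0, ∀ x, δ ≤ ‖x‖ → ε ≤ f x) :
    Tendsto (fun s : ℝ => capVolume μ (fun y => f (s • y) / s ^ p) 1) (𝓝[>] 0)
      (𝓝 (capVolume μ q 1)) := by
  have hmeas (s : ℝ) : Measurable fun y => f (s • y) / s ^ p :=
    (hf.comp (measurable_const_smul s)).div_const _
  simp only [capVolume_eq_integral_max μ (hmeas _), capVolume_eq_integral_max μ hqm]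
  refine tendsto_integral_filter_of_dominated_convergence (fun y => max (1 - c / 2 * ‖y‖ ^ p) 0)
    (.of_forall fun s => (((hmeas s).const_sub 1).max measurable_const).aestronglyMeasurable) ?_
    (integrable_max_one_sub_mul_norm_pow μ hp (half_pos hc))
    (.of_forall fun y => ((hq.tendsto_div_pow hfq y).const_sub 1).max tendsto_const_nhds)
  filter_upwards [eventually_max_one_sub_div_pow_le hp
    (eventually_mul_norm_pow_le_of_lt (half_lt_self hc) hcq hfq) hfar] with s hs
  exact .of_forall fun y => by simpa only [Real.norm_of_nonneg (le_max_right _ _)] using hs y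

variable (μ : Measure E) [μ.IsAddHaarMeasure]

theorem capVolume_pow (hf : Measurable f) (p : ℕ) {s : ℝ} (hs : 0 < s) :
    capVolume μ f (s ^ p) =
      s ^ (Module.finrank ℝ E + p) * capVolume μ (fun y => f (s • y) / s ^ p) 1 := by
  have hmeas : Measurable fun y => f (s • y) / s ^ p :=
    (hf.comp (measurable_const_smul s)).div_const _
  have hscale (x : E) : max (1 - f x / s ^ p) 0 = (s ^ p)⁻¹ * max (s ^ p - f x) 0 := by
    rw [mul_max_of_nonneg _ _ (by positivity), mul_zero, mul_sub, inv_mul_cancel₀ (by positivity),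
      div_eq_inv_mul]
  rw [capVolume_eq_integral_max μ hf, capVolume_eq_integral_max μ hmeas,
    Measure.integral_comp_smul μ (fun x => max (1 - f x / s ^ p) 0) s]
  simp only [hscale, integral_const_mul, smul_eq_mul]
  rw [abs_of_pos (by positivity), pow_add]
  field_simp

theorem IsPosHomogeneous.measureReal_setOf_lt (hq : IsPosHomogeneous q p) (hp : p ≠ 0) {r : ℝ}
    (hr : 0 < r) :
    μ.real {x | q x < r} = r ^ ((Module.finrank ℝ E : ℝ) / p) * μ.real {x | q x < 1} := by
  set s := r ^ (p⁻¹ : ℝ) with hs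
  have hs0 : 0 < s := by positivity
  have hsp : s ^ p = r := Real.rpow_inv_natCast_pow hr.le hp
  have hset : {x | q x < r} = s • {x | q x < 1} := by
    ext x
    rw [Set.mem_smul_set_iff_inv_smul_mem₀ hs0.ne', Set.mem_ofPred_eq, Set.mem_ofPred_eq,
      hq (by positivity), inv_pow, hsp, inv_mul_lt_one₀ hr]
  have hsd : s ^ Module.finrank ℝ E = r ^ ((Module.finrank ℝ E : ℝ) / p) := by
    rw [hs, ← Real.rpow_mul_natCast hr.le, inv_mul_eq_div]
  rw [hset, measureReal_def, Measure.addHaar_smul_of_nonneg μ hs0.le, ENNReal.toReal_mul,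
    ENNReal.toReal_ofReal (by positivity), hsd, measureReal_def]

theorem IsPosHomogeneous.capVolume_one (hq : IsPosHomogeneous q p) (hp : p ≠ 0)
    (hqm : Measurable q) (hc : 0 < c) (hcq : ∀ x, c * ‖x‖ ^ p ≤ q x) :
    capVolume μ q 1 = p / (Module.finrank ℝ E + p) * μ.real {x | q x < 1} := by
  have hint : Integrable (fun x => max (1 - q x) 0) μ :=
    (integrable_max_one_sub_mul_norm_pow μ hp hc).mono'
      ((hqm.const_sub 1).max measurable_const).aestronglyMeasurable <| .of_forall fun x => by
        rw [Real.norm_of_nonneg (le_max_right _ _)]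
        gcongr
        exact hcq x
  have hexp : 0 < (Module.finrank ℝ E : ℝ) / p + 1 := by positivity
  calc capVolume μ q 1 = ∫ u in (0 : ℝ)..1, μ.real {x | q x < u} :=
        capVolume_eq_intervalIntegral μ hqm (fun x => le_trans (by positivity) (hcq x)) zero_le_one
          hint
    _ = ∫ u in (0 : ℝ)..1, u ^ ((Module.finrank ℝ E : ℝ) / p) * μ.real {x | q x < 1} := by
        rw [intervalIntegral.integral_of_le zero_le_one,
          intervalIntegral.integral_of_le zero_le_one]
        exact setIntegral_congr_fun measurableSet_Ioc fun u hu =>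
          hq.measureReal_setOf_lt μ hp hu.1
    _ = p / (Module.finrank ℝ E + p) * μ.real {x | q x < 1} := by
        rw [intervalIntegral.integral_mul_const, integral_rpow (.inl (by linarith)),
          Real.one_rpow, Real.zero_rpow hexp.ne']
        field_simp
        ring

theorem tendsto_rpow_mul_capVolume (hf : Measurable f) (hp : p ≠ 0) (hq : IsPosHomogeneous q p)
    (hqc : Continuous q) (hpos : ∀ x ≠ 0, 0 < q x)
    (hfq : (fun x => f x - q x) =o[𝓝 0] fun x => ‖x‖ ^ p)
    (hfar : ∀ δ > 0, ∃ ε > 0, ∀ x, δ ≤ ‖x‖ → ε ≤ f x) :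
    Tendsto (fun t : ℝ => t ^ (-((Module.finrank ℝ E : ℝ) + p) / p) * capVolume μ f t) (𝓝[>] 0)
      (𝓝 (p / (Module.finrank ℝ E + p) * μ.real {x | q x < 1})) := by
  obtain ⟨c, hc, hcq⟩ := hq.exists_mul_norm_pow_le hp hqc hpos
  have hroot : Tendsto (fun t : ℝ => t ^ (p⁻¹ : ℝ)) (𝓝[>] 0) (𝓝[>] 0) := by
    refine tendsto_nhdsWithin_iff.2 ⟨?_, ?_⟩
    · exact ((Real.continuous_rpow_const (by positivity)).tendsto' 0 0
        (Real.zero_rpow (by positivity))).mono_left nhdsWithin_le_nhds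
    · filter_upwards [self_mem_nhdsWithin] with t ht using Real.rpow_pos_of_pos ht _
  have hlim := (tendsto_capVolume_comp_smul_div_pow μ hf hp hq hqc.measurable hc hcq hfq hfar).comp
    hroot
  rw [hq.capVolume_one μ hp hqc.measurable hc hcq] at hlim
  refine hlim.congr' ?_
  filter_upwards [self_mem_nhdsWithin] with t (ht : 0 < t)
  have hcancel : t ^ (-((Module.finrank ℝ E : ℝ) + p) / p) *
      (t ^ (p⁻¹ : ℝ)) ^ (Module.finrank ℝ E + p) = 1 := by
    rw [← Real.rpow_mul_natCast ht.le, ← Real.rpow_add ht]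
    push_cast
    rw [neg_div, inv_mul_eq_div, neg_add_cancel, Real.rpow_zero]
  have hscaled := capVolume_pow μ hf p (Real.rpow_pos_of_pos ht (p⁻¹ : ℝ))
  rw [Real.rpow_inv_natCast_pow ht.le hp] at hscaled
  rw [hscaled, ← mul_assoc, hcancel, one_mul, Function.comp_apply,
    Real.rpow_inv_natCast_pow ht.le hp]

end Rescaling

section Taylor

variable {E F : Type*} [NormedAddCommGroup E] [NormedSpace ℝ E] [NormedAddCommGroup F]
  [NormedSpace ℝ F]

variable {f : E → F} {f' : E → E →L[ℝ] F} {x : E} {f'' : E →L[ℝ] E →L[ℝ] F}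

theorem norm_taylor_two_remainder_le {h : E} {C : ℝ}
    (hf : ∀ t ∈ Set.Icc (0 : ℝ) 1, HasFDerivAt f (f' (x + t • h)) (x + t • h))
    (hC : ∀ t ∈ Set.Icc (0 : ℝ) 1, ‖f' (x + t • h) - f' x - f'' (t • h)‖ ≤ C) :
    ‖f (x + h) - f x - f' x h - (2⁻¹ : ℝ) • f'' h h‖ ≤ C * ‖h‖ := by
  let g (t : ℝ) : F := f (x + t • h) - t • f' x h - (2⁻¹ * t ^ 2) • f'' h h
  have hderiv (t : ℝ) (ht : t ∈ Set.Icc 0 1) :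
      HasDerivAt g ((f' (x + t • h) - f' x - f'' (t • h)) h) t := by
    have hline : HasDerivAt (fun t : ℝ => x + t • h) h t := by
      simpa using ((hasDerivAt_id t).smul_const h).const_add x
    have hquad : HasDerivAt (fun t : ℝ => 2⁻¹ * t ^ 2) t t := by
      simpa using (hasDerivAt_pow 2 t).const_mul (2⁻¹ : ℝ)
    refine ((((hf t ht).comp_hasDerivAt t hline).sub
      ((hasDerivAt_id t).smul_const (f' x h))).sub (hquad.smul_const (f'' h h))).congr_deriv ?_
    simp
  have hmean := norm_image_sub_le_of_norm_deriv_le_segment_01'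
    (fun t ht => (hderiv t ht).hasDerivWithinAt) fun t ht =>
      (ContinuousLinearMap.le_opNorm _ h).trans <|
        mul_le_mul_of_nonneg_right (hC t (Set.Ico_subset_Icc_self ht)) (norm_nonneg h)
  have hremainder : g 1 - g 0 = f (x + h) - f x - f' x h - (2⁻¹ : ℝ) • f'' h h := by
    simp only [g, one_smul, zero_smul, add_zero]
    module
  rwa [← hremainder]

theorem isLittleO_taylor_two (hf : ∀ᶠ y in 𝓝 x, HasFDerivAt f (f' y) y)
    (hx : HasFDerivAt f' f'' x) :
    (fun h => f (x + h) - f x - f' x h - (2⁻¹ : ℝ) • f'' h h) =o[𝓝 0] fun h => ‖h‖ ^ 2 := by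
  refine Asymptotics.isLittleO_iff.2 fun ε hε => ?_
  have hfx : ∀ᶠ h in 𝓝 (0 : E), HasFDerivAt f (f' (x + h)) (x + h) :=
    (Continuous.tendsto' (by fun_prop) 0 x (add_zero x)).eventually hf
  have hf' := (hasFDerivAt_iff_isLittleO_nhds_zero.1 hx).bound hε
  obtain ⟨δ, hδ, hball⟩ := Metric.eventually_nhds_iff.1 (hfx.and hf')
  refine Metric.eventually_nhds_iff.2 ⟨δ, hδ, fun h hh => ?_⟩
  have hshort (t : ℝ) (ht : t ∈ Set.Icc 0 1) : ‖t • h‖ ≤ ‖h‖ := by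
    rw [norm_smul_of_nonneg ht.1]
    exact mul_le_of_le_one_left (norm_nonneg h) ht.2
  have hsegment (t : ℝ) (ht : t ∈ Set.Icc 0 1) : dist (t • h) 0 < δ := by
    rw [dist_zero_right] at hh ⊢
    exact (hshort t ht).trans_lt hh
  calc ‖f (x + h) - f x - f' x h - (2⁻¹ : ℝ) • f'' h h‖ ≤ ε * ‖h‖ * ‖h‖ :=
        norm_taylor_two_remainder_le (fun t ht => (hball (hsegment t ht)).1) fun t ht =>
          (hball (hsegment t ht)).2.trans (by gcongr; exact hshort t ht)
    _ = ε * ‖‖h‖ ^ 2‖ := by rw [norm_pow, norm_norm]; ring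

end Taylor

section Matrix

open scoped Matrix

theorem fderiv_fderiv_eq_dotProduct_hessianMatrix_mulVec {n : ℕ} (f : EuclideanSpace ℝ (Fin n) → ℝ)
    (z x y : EuclideanSpace ℝ (Fin n)) :
    fderiv ℝ (fderiv ℝ f) z x y = x.ofLp ⬝ᵥ hessianMatrix f z *ᵥ y.ofLp := by
  let b := (EuclideanSpace.basisFun (Fin n) ℝ).toBasis
  have hmatrix : LinearMap.BilinForm.toMatrix b (fderiv ℝ (fderiv ℝ f) z).toLinearMap₁₂ =
      hessianMatrix f z := by
    ext i j
    simp [b, hessianMatrix, iteratedFDeriv_two_apply, LinearMap.BilinForm.toMatrix_apply]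
  rw [← hmatrix]
  exact LinearMap.BilinForm.apply_eq_dotProduct_toMatrix_mulVec b
    (fderiv ℝ (fderiv ℝ f) z).toLinearMap₁₂ x y

theorem isLittleO_taylor_hessianMatrix {n : ℕ} {f : EuclideanSpace ℝ (Fin n) → ℝ}
    {z : EuclideanSpace ℝ (Fin n)} (hf : ContDiffAt ℝ 2 f z) :
    (fun h => f (z + h) - f z - fderiv ℝ f z h - h.ofLp ⬝ᵥ hessianMatrix f z *ᵥ h.ofLp / 2)
      =o[𝓝 0] fun h => ‖h‖ ^ 2 := by
  have hdiff : ∀ᶠ y in 𝓝 z, HasFDerivAt f (fderiv ℝ f y) y :=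
    (hf.eventually (by simp)).mono fun y hy => (hy.differentiableAt two_ne_zero).hasFDerivAt
  have hdiff' : DifferentiableAt ℝ (fderiv ℝ f) z :=
    (hf.fderiv_right (m := 1) (by norm_num)).differentiableAt one_ne_zero
  simpa only [fderiv_fderiv_eq_dotProduct_hessianMatrix_mulVec, smul_eq_mul, inv_mul_eq_div] using
    isLittleO_taylor_two hdiff hdiff'.hasFDerivAt

variable {ι : Type*} [Fintype ι]

theorem isPosHomogeneous_dotProduct_mulVec_div_two (A : Matrix ι ι ℝ) :
    IsPosHomogeneous (fun x : EuclideanSpace ℝ ι => x.ofLp ⬝ᵥ A *ᵥ x.ofLp / 2) 2 := by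
  intro s _ x
  simp only [WithLp.ofLp_smul, Matrix.mulVec_smul, smul_dotProduct, dotProduct_smul, smul_eq_mul]
  ring

theorem dotProduct_mulVec_div_two_pos {A : Matrix ι ι ℝ} (hA : A.PosDef)
    {x : EuclideanSpace ℝ ι} (hx : x ≠ 0) : 0 < x.ofLp ⬝ᵥ A *ᵥ x.ofLp / 2 :=
  half_pos (by simpa using hA.dotProduct_mulVec_pos (x := x.ofLp) (by simpa using hx))

variable [DecidableEq ι]

open scoped ComplexOrder MatrixOrder in
theorem exists_isUnit_conjTranspose_mul_self {𝕜 : Type*} [RCLike 𝕜] {A : Matrix ι ι 𝕜}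
    (hA : A.PosDef) : ∃ B : Matrix ι ι 𝕜, IsUnit B ∧ A = Bᴴ * B :=
  CStarAlgebra.isStrictlyPositive_iff_eq_star_mul_self.1 (Matrix.isStrictlyPositive_iff_posDef.2 hA)

theorem norm_toEuclideanLin_sq (B : Matrix ι ι ℝ) (x : EuclideanSpace ℝ ι) :
    ‖B.toEuclideanLin x‖ ^ 2 = x.ofLp ⬝ᵥ (Bᴴ * B) *ᵥ x.ofLp := by
  rw [← Matrix.mulVec_mulVec, Matrix.dotProduct_mulVec, Matrix.vecMul_conjTranspose,
    ← real_inner_self_eq_norm_sq, EuclideanSpace.inner_eq_star_dotProduct]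
  simp

theorem measureReal_setOf_dotProduct_mulVec_lt (μ : Measure (EuclideanSpace ℝ ι))
    [μ.IsAddHaarMeasure] {A : Matrix ι ι ℝ} (hA : A.PosDef) {r : ℝ} (hr : 0 < r) :
    μ.real {x | x.ofLp ⬝ᵥ A *ᵥ x.ofLp < r} =
      √r ^ Fintype.card ι * μ.real (Metric.ball 0 1) / √A.det := by
  obtain ⟨B, hB, rfl⟩ := exists_isUnit_conjTranspose_mul_self hA
  have hdet : LinearMap.det B.toEuclideanLin = B.det := by
    rw [Matrix.toEuclideanLin_eq_toLin_orthonormal, LinearMap.det_toLin]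
  have hdet0 : LinearMap.det B.toEuclideanLin ≠ 0 := hdet ▸ (B.isUnit_iff_isUnit_det.1 hB).ne_zero
  have hset : {x : EuclideanSpace ℝ ι | x.ofLp ⬝ᵥ (Bᴴ * B) *ᵥ x.ofLp < r} =
      B.toEuclideanLin ⁻¹' Metric.ball 0 √r := by
    ext x
    rw [Set.mem_preimage, mem_ball_zero_iff, Real.lt_sqrt (norm_nonneg _), norm_toEuclideanLin_sq,
      Set.mem_ofPred_eq]
  rw [hset, measureReal_def, Measure.addHaar_preimage_linearMap μ hdet0,
    Measure.addHaar_ball_of_pos μ 0 (Real.sqrt_pos.2 hr), finrank_euclideanSpace,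
    ENNReal.toReal_mul, ENNReal.toReal_mul, ENNReal.toReal_ofReal (abs_nonneg _),
    ENNReal.toReal_ofReal (by positivity), ← measureReal_def, hdet, Matrix.det_mul,
    Matrix.det_conjTranspose, star_trivial, Real.sqrt_mul_self_eq_abs, abs_inv]
  ring

theorem volume_region_limit_general (μ : Measure (EuclideanSpace ℝ ι)) [μ.IsAddHaarMeasure]
    {f : EuclideanSpace ℝ ι → ℝ} {A : Matrix ι ι ℝ} (hf : Measurable f) (hA : A.PosDef)
    (hfA : (fun x => f x - x.ofLp ⬝ᵥ A *ᵥ x.ofLp / 2) =o[𝓝 0] fun x => ‖x‖ ^ 2)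
    (hfar : ∀ δ > 0, ∃ ε > 0, ∀ x, δ ≤ ‖x‖ → ε ≤ f x) :
    Tendsto (fun t : ℝ => t ^ (-((Fintype.card ι : ℝ) + 2) / 2) * capVolume μ f t) (𝓝[>] 0)
      (𝓝 (√2 ^ (Fintype.card ι + 2) * μ.real (Metric.ball 0 1) /
        ((Fintype.card ι + 2) * √A.det))) := by
  have hlim := tendsto_rpow_mul_capVolume μ hf two_ne_zero
    (isPosHomogeneous_dotProduct_mulVec_div_two A) (by fun_prop)
    (fun _ => dotProduct_mulVec_div_two_pos hA) hfA hfar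
  simp only [div_lt_one (zero_lt_two' ℝ), measureReal_setOf_dotProduct_mulVec_lt μ hA zero_lt_two,
    finrank_euclideanSpace, Nat.cast_ofNat] at hlim
  convert hlim using 2
  rw [pow_add, Real.sq_sqrt zero_le_two]
  field_simp

end Matrix

theorem volume_region_limit (n : ℕ) (hn : 1 ≤ n) (f : EuclideanSpace ℝ (Fin n) → ℝ)
    (hf : ContDiff ℝ (⊤ : ℕ∞) f) (hconv : ConvexOn ℝ Set.univ f)
    (hf0 : f 0 = 0) (hgrad : gradient f 0 = 0)
    (hhess : (hessianMatrix f 0).PosDef) :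
    Tendsto (fun t : ℝ => t ^ (-((n : ℝ) + 2) / 2) * ∫ x in {x | f x < t}, (t - f x))
      (𝓝[>] 0)
      (𝓝 (Real.sqrt 2 ^ (n + 2) *
        (volume (Metric.ball (0 : EuclideanSpace ℝ (Fin n)) 1)).toReal /
        (((n : ℝ) + 2) * Real.sqrt (hessianMatrix f 0).det))) := by
  have hderiv : fderiv ℝ f 0 = 0 := by rw [← toDual_gradient, hgrad, map_zero]
  have htaylor : (fun x => f x - x.ofLp ⬝ᵥ (hessianMatrix f 0).mulVec x.ofLp / 2)
      =o[𝓝 0] fun x => ‖x‖ ^ 2 := by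
    simpa [hf0, hderiv] using
      isLittleO_taylor_hessianMatrix (contDiff_infty.1 hf 2).contDiffAt (z := 0)
  have hfar := (isPosHomogeneous_dotProduct_mulVec_div_two _).exists_pos_forall_le_of_convexOn
    two_ne_zero (by fun_prop) (fun _ => dotProduct_mulVec_div_two_pos hhess) hconv htaylor
  simpa [capVolume, measureReal_def] using
    volume_region_limit_general volume hf.continuous.measurable hhess htaylor hfar
end

section
/- Let n ≥ 1 and let f : ℝⁿ → ℝ be a smooth convex function whose Hessian D²f(x) is positive definite at every x ∈ ℝⁿ. Suppose there exists a nonnegative function φ : (0,∞) → ℝ such that V*_x(k) = φ(k) for all x ∈ ℝⁿ and all k > 0, where V*_x(k) = ∫_{{y : f(y) < f(x) + ⟨∇f(x), y − x⟩ + k}} (f(x) + ⟨∇f(x), y − x⟩ + k − f(y)) dy. Then the graph of f is an elliptic paraboloid, i.e. there exist a positive definite symmetric n×n matrix A, a vector b ∈ ℝⁿ and a constant c ∈ ℝ such that f(x) = ⟨x, A x⟩ + ⟨b, x⟩ + c for all x ∈ ℝⁿ. -/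
open MeasureTheory Filter
open scoped RealInnerProductSpace Topology

/-!
Write `D x y = f y - f x - ⟪∇f x, y - x⟫`. The layer-cake formula expresses `∫ exp (-t D x y) dy`
through the volumes `V*_x(k)`, so it equals some `ψ t` independent of `x`. This is used twice.

* As `t → ∞`, Laplace's method gives `ψ t ~ (2π / t)^(n/2) (det D²f(x))^(-1/2)`, so `det D²f` is
  constant.
* At `θ = ∇f x` it reads `exp (t f*(θ)) ψ t = ∫ exp (t (⟪θ, y⟫ - f y)) dy` for the Legendre
  transform `f*`. The right side is a Laplace transform in `θ`, so `exp (t f*)` is a positive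
  definite kernel of `p + q`; letting `t → 0` shows that `f*` is conditionally positive.

Second differences of a conditionally positive function yield, for the Hessian `N` of `f*` and its
derivatives in a fixed direction, the inequality `N'' ≥ N' N⁻¹ N'`. As `det N` is constant, Jacobi's
formula gives `tr (N⁻¹ N'') = tr (N⁻¹ N' N⁻¹ N')`, so the inequality is an equality.
Polarizing it with the full symmetry of the derivatives of `f*` and using `tr (N⁻¹ N') = 0` forces
`N' = 0`. Hence `N` and `D²f` are locally constant and `f` is a quadratic polynomial.
-/

section PositiveOperators

variable {E : Type*} [NormedAddCommGroup E] [InnerProductSpace ℝ E]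

lemma inner_map_self_nonneg {T : E →ₗ[ℝ] E} (hT : ∀ u ≠ 0, 0 < ⟪T u, u⟫) (u : E) :
    0 ≤ ⟪T u, u⟫ := by
  rcases eq_or_ne u 0 with rfl | hu
  exacts [by simp, (hT u hu).le]

lemma injective_of_inner_pos {T : E →ₗ[ℝ] E} (hT : ∀ u ≠ 0, 0 < ⟪T u, u⟫) :
    Function.Injective T := by
  refine (injective_iff_map_eq_zero T).mpr fun u hu => ?_
  by_contra hne
  simpa [hu] using hT u hne

variable [FiniteDimensional ℝ E]

open scoped MatrixOrder in
lemma exists_eq_adjoint_comp_self {T : E →ₗ[ℝ] E} (hT : T.IsPositive) :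
    ∃ S : E →ₗ[ℝ] E, T = LinearMap.adjoint S ∘ₗ S := by
  let toMat := LinearMap.toMatrixOrthonormal (stdOrthonormalBasis ℝ E)
  have hM : (toMat T).PosSemidef :=
    (LinearMap.posSemidef_toMatrix_iff (stdOrthonormalBasis ℝ E)).mpr hT
  obtain ⟨L, hL⟩ := CStarAlgebra.nonneg_iff_eq_star_mul_self.mp hM.nonneg
  refine ⟨toMat.symm L, EquivLike.injective toMat ?_⟩
  rw [hL, ← LinearMap.star_eq_adjoint, ← Module.End.mul_eq_comp, map_mul, map_star,
    StarAlgEquiv.apply_symm_apply]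

lemma det_adjoint (S : E →ₗ[ℝ] E) : LinearMap.det (LinearMap.adjoint S) = LinearMap.det S := by
  let b := stdOrthonormalBasis ℝ E
  rw [← LinearMap.det_toMatrix b.toBasis, ← LinearMap.det_toMatrix b.toBasis S,
    LinearMap.toMatrix_adjoint, Matrix.det_conjTranspose, star_trivial]

lemma det_ne_zero_of_inner_pos {T : E →ₗ[ℝ] E} (hT : ∀ u ≠ 0, 0 < ⟪T u, u⟫) :
    LinearMap.det T ≠ 0 := fun hdet =>
  (LinearMap.bot_lt_ker_of_det_eq_zero hdet).ne'
    (LinearMap.ker_eq_bot.mpr (injective_of_inner_pos hT))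

lemma eq_zero_of_trace_comp_eq_zero {H P : E →ₗ[ℝ] E} (hH : ∀ u ≠ 0, 0 < ⟪H u, u⟫)
    (hP : P.IsPositive) (htr : LinearMap.trace ℝ E (H ∘ₗ P) = 0) : P = 0 := by
  obtain ⟨S, rfl⟩ := exists_eq_adjoint_comp_self hP
  let e := stdOrthonormalBasis ℝ E
  have hsum : ∑ i, ⟪H (LinearMap.adjoint S (e i)), LinearMap.adjoint S (e i)⟫ = 0 := by
    rw [← htr, ← LinearMap.comp_assoc, LinearMap.trace_comp_comm',
      LinearMap.trace_eq_sum_inner _ e]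
    refine Finset.sum_congr rfl fun i _ => ?_
    rw [LinearMap.comp_apply, LinearMap.comp_apply, LinearMap.adjoint_inner_right,
      real_inner_comm]
  have hzero : LinearMap.adjoint S = 0 := e.toBasis.ext fun i => by
    by_contra hne
    have := (Finset.sum_eq_zero_iff_of_nonneg fun i _ => inner_map_self_nonneg hH _).mp hsum i
      (Finset.mem_univ i)
    exact (hH _ (by simpa using hne)).ne' this
  rw [hzero, LinearMap.zero_comp]

lemma exists_mul_sq_le_inner {T : E →ₗ[ℝ] E} (hsymm : T.IsSymmetric)
    (hT : ∀ u ≠ 0, 0 < ⟪T u, u⟫) : ∃ c > 0, ∀ u, c * ‖u‖ ^ 2 ≤ ⟪T u, u⟫ := by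
  obtain ⟨S, rfl⟩ := exists_eq_adjoint_comp_self ⟨hsymm, inner_map_self_nonneg hT⟩
  have hinj : Function.Injective (LinearMap.adjoint S ∘ S) := injective_of_inner_pos hT
  obtain ⟨K, hK, hS⟩ := S.exists_antilipschitzWith (LinearMap.ker_eq_bot.mpr hinj.of_comp)
  refine ⟨((K : ℝ) ^ 2)⁻¹, by positivity, fun u => ?_⟩
  rw [LinearMap.comp_apply, LinearMap.adjoint_inner_left, real_inner_self_eq_norm_sq,
    inv_mul_le_iff₀ (by positivity), ← mul_pow]
  have := hS.le_mul_dist u 0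
  rw [map_zero, dist_zero_right, dist_zero_right] at this
  gcongr

end PositiveOperators

section LayerCake

lemma lintegral_exp_mul_ofReal_sub (t s : ℝ) :
    ∫⁻ k, ENNReal.ofReal (Real.exp (-(t * k))) * ENNReal.ofReal (k - s) =
      ENNReal.ofReal (Real.exp (-(t * s))) *
        ∫⁻ k, ENNReal.ofReal (Real.exp (-(t * k))) * ENNReal.ofReal k := by
  rw [← lintegral_const_mul _ (by fun_prop), ← lintegral_add_right_eq_self _ s]
  refine lintegral_congr fun k => ?_
  rw [← mul_assoc, ← ENNReal.ofReal_mul (Real.exp_pos (-(t * s))).le, ← Real.exp_add,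
    add_sub_cancel_right]
  congr 3
  ring

lemma lintegral_exp_mul_ofReal_ne_zero (t : ℝ) :
    ∫⁻ k, ENNReal.ofReal (Real.exp (-(t * k))) * ENNReal.ofReal k ≠ 0 := by
  rw [← pos_iff_ne_zero, lintegral_pos_iff_support (by fun_prop)]
  refine lt_of_lt_of_le ?_ (measure_mono (s := Set.Ioi (0 : ℝ)) fun k (hk : 0 < k) => ?_)
  · simp
  · simp [hk, Real.exp_pos]

lemma lintegral_exp_mul_ofReal_ne_top {t : ℝ} (ht : 0 < t) :
    ∫⁻ k, ENNReal.ofReal (Real.exp (-(t * k))) * ENNReal.ofReal k ≠ ⊤ := by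
  have hint := integrableOn_rpow_mul_exp_neg_mul_rpow (s := 1) (p := 1) (by norm_num) one_pos ht
  have htop := ((integrable_indicator_iff measurableSet_Ioi).mpr hint).lintegral_lt_top
  refine (lt_of_le_of_lt (lintegral_mono fun k => ?_) htop).ne
  rw [← ENNReal.ofReal_mul (Real.exp_pos _).le]
  refine ENNReal.ofReal_le_ofReal ?_
  rcases le_or_gt k 0 with hk | hk
  · rw [Set.indicator_of_notMem (by simpa using hk)]
    exact mul_nonpos_of_nonneg_of_nonpos (Real.exp_pos _).le hk
  · rw [Set.indicator_of_mem (by exact hk), Real.rpow_one, mul_comm, neg_mul]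

variable {α : Type*} [MeasurableSpace α] {μ : Measure α} [SFinite μ]

lemma lintegral_exp_neg_mul_eq_layercake {D : α → ℝ} (hD : Measurable D) (t : ℝ) :
    (∫⁻ y, ENNReal.ofReal (Real.exp (-(t * D y))) ∂μ) *
        ∫⁻ k, ENNReal.ofReal (Real.exp (-(t * k))) * ENNReal.ofReal k =
      ∫⁻ k, ENNReal.ofReal (Real.exp (-(t * k))) * ∫⁻ y, ENNReal.ofReal (k - D y) ∂μ := by
  rw [← lintegral_mul_const _ (by fun_prop)]
  simp_rw [← lintegral_exp_mul_ofReal_sub]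
  rw [lintegral_lintegral_swap (by fun_prop)]
  exact lintegral_congr fun k => lintegral_const_mul _ (by fun_prop)

lemma integral_exp_neg_mul_congr {D D' : α → ℝ} (hD : Measurable D) (hD' : Measurable D')
    (h : ∀ k, ∫⁻ y, ENNReal.ofReal (k - D y) ∂μ = ∫⁻ y, ENNReal.ofReal (k - D' y) ∂μ)
    {t : ℝ} (ht : 0 < t) :
    ∫ y, Real.exp (-(t * D y)) ∂μ = ∫ y, Real.exp (-(t * D' y)) ∂μ := by
  have hlint : ∫⁻ y, ENNReal.ofReal (Real.exp (-(t * D y))) ∂μ =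
      ∫⁻ y, ENNReal.ofReal (Real.exp (-(t * D' y))) ∂μ := by
    rw [← ENNReal.mul_left_inj (lintegral_exp_mul_ofReal_ne_zero t)
      (lintegral_exp_mul_ofReal_ne_top ht), lintegral_exp_neg_mul_eq_layercake hD,
      lintegral_exp_neg_mul_eq_layercake hD']
    simp_rw [h]
  rw [integral_eq_lintegral_of_nonneg_ae (.of_forall fun _ => (Real.exp_pos _).le)
    (by fun_prop), integral_eq_lintegral_of_nonneg_ae (.of_forall fun _ => (Real.exp_pos _).le)
    (by fun_prop), hlint]

end LayerCake

section Gradient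

lemma hasDerivAt_line {E F : Type*} [NormedAddCommGroup E] [NormedSpace ℝ E]
    [NormedAddCommGroup F] [NormedSpace ℝ F] {G : E → F} {G' : E →L[ℝ] F} {x v : E} {s : ℝ}
    (hG : HasFDerivAt G G' (x + s • v)) :
    HasDerivAt (fun r : ℝ => G (x + r • v)) (G' v) s := by
  have hline : HasDerivAt (fun r : ℝ => x + r • v) v s := by
    simpa using ((hasDerivAt_id s).smul_const v).const_add x
  exact hG.comp_hasDerivAt s hline

variable {E : Type*} [NormedAddCommGroup E] [InnerProductSpace ℝ E]

lemma hasDerivAt_inner_line {G : E → E} {G' : E →L[ℝ] E} {x v : E} {s : ℝ}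
    (hG : HasFDerivAt G G' (x + s • v)) (w : E) :
    HasDerivAt (fun r : ℝ => ⟪G (x + r • v), w⟫) ⟪G' v, w⟫ s := by
  simpa using (hasDerivAt_line hG).inner ℝ (hasDerivAt_const s w)

variable [CompleteSpace E] {f : E → ℝ}

lemma contDiff_gradient {m n : WithTop ℕ∞} (hf : ContDiff ℝ n f) (hmn : m + 1 ≤ n) :
    ContDiff ℝ m (gradient f) :=
  (InnerProductSpace.toDual ℝ E).symm.contDiff.comp (hf.fderiv_right hmn)

lemma inner_fderiv_gradient (f : E → ℝ) (x u v : E) :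
    ⟪fderiv ℝ (gradient f) x u, v⟫ = fderiv ℝ (fderiv ℝ f) x u v := by
  have h : gradient f = (InnerProductSpace.toDual ℝ E).symm ∘ fderiv ℝ f := rfl
  rw [h, LinearIsometryEquiv.comp_fderiv]
  exact InnerProductSpace.toDual_symm_apply

lemma isSymmetric_of_hasFDerivAt_of_hasGradientAt {g : E → E} {g' : E →L[ℝ] E} {x : E}
    (hf : ∀ᶠ y in 𝓝 x, HasGradientAt f (g y) y) (hg : HasFDerivAt g g' x) :
    (g' : E →ₗ[ℝ] E).IsSymmetric := fun u v => by
  have hsymm := second_derivative_symmetric_of_eventually_of_real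
    (hf.mono fun y hy => hy.hasFDerivAt)
    ((InnerProductSpace.toDual ℝ E).toContinuousLinearEquiv.hasFDerivAt.comp x hg) u v
  rw [ContinuousLinearMap.coe_coe, real_inner_comm (g' v) u]
  exact hsymm

lemma isSymmetric_fderiv_gradient (hf : ContDiff ℝ 2 f) (x : E) :
    (fderiv ℝ (gradient f) x : E →ₗ[ℝ] E).IsSymmetric :=
  isSymmetric_of_hasFDerivAt_of_hasGradientAt
    (.of_forall fun y => (hf.differentiable (by simp) y).hasGradientAt)
    ((contDiff_gradient hf (m := 1) (by norm_num)).differentiable (by simp) x).hasFDerivAt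

lemma hasDerivAt_line_inner {w x v : E} {s : ℝ} (hf : HasGradientAt f w (x + s • v)) :
    HasDerivAt (fun r : ℝ => f (x + r • v)) ⟪w, v⟫ s :=
  hasDerivAt_line hf.hasFDerivAt

end Gradient

section Bregman

variable {E : Type*} [NormedAddCommGroup E] [InnerProductSpace ℝ E] [CompleteSpace E] {f : E → ℝ}

/-- The Bregman divergence of `f`: the height of the graph of `f` at `y` above its tangent
hyperplane at `x`. The sections of `f` at `x` are its sublevel sets. -/
noncomputable def bregman (f : E → ℝ) (x y : E) : ℝ := f y - f x - ⟪gradient f x, y - x⟫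

lemma continuous_bregman (hf : Continuous f) (x : E) : Continuous (bregman f x) := by
  unfold bregman
  fun_prop

lemma bregman_nonneg (hf : Differentiable ℝ f) (hconv : ConvexOn ℝ Set.univ f) (x y : E) :
    0 ≤ bregman f x y := by
  have hline : ConvexOn ℝ Set.univ (fun r : ℝ => f (x + r • (y - x))) :=
    (hconv.comp_affineMap (AffineMap.lineMap x y)).congr fun r _ => by
      simp [AffineMap.lineMap_apply, add_comm]
  have hslope := hline.le_slope_of_hasDerivAt (Set.mem_univ (0 : ℝ)) (Set.mem_univ 1) one_pos
    (hasDerivAt_line_inner (hf _).hasGradientAt)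
  simp only [zero_smul, add_zero, slope_def_field, one_smul, add_sub_cancel, sub_zero,
    div_one] at hslope
  rw [bregman]
  linarith

lemma bregman_smul_le (hconv : ConvexOn ℝ Set.univ f) (x w : E) {s : ℝ} (h0 : 0 ≤ s)
    (h1 : s ≤ 1) : bregman f x (x + s • w) ≤ s * bregman f x (x + w) := by
  have h := hconv.2 (Set.mem_univ x) (Set.mem_univ (x + w)) (sub_nonneg.mpr h1) h0 (by ring)
  rw [show (1 - s) • x + s • (x + w) = x + s • w by module, smul_eq_mul, smul_eq_mul] at h
  simp only [bregman, add_sub_cancel_left, inner_smul_right]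
  linarith

lemma bregman_eq_add (f : E → ℝ) (x m y : E) :
    bregman f x y = bregman f m y + bregman f x m + ⟪gradient f m - gradient f x, y - m⟫ := by
  simp only [bregman, inner_sub_left, inner_sub_right]
  ring

lemma inner_gradient_sub_le_bregman (hf : Differentiable ℝ f) (hconv : ConvexOn ℝ Set.univ f)
    (x v : E) : ⟪gradient f (x + v) - gradient f x, v⟫ ≤ bregman f x (x + (2 : ℝ) • v) := by
  have h := bregman_eq_add f x (x + v) (x + (2 : ℝ) • v)
  rw [show x + (2 : ℝ) • v - (x + v) = v by module] at h
  linarith [bregman_nonneg hf hconv (x + v) (x + (2 : ℝ) • v), bregman_nonneg hf hconv x (x + v)]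

lemma hasDerivAt_bregman_line (hf : Differentiable ℝ f) (x u : E) (s : ℝ) :
    HasDerivAt (fun r : ℝ => bregman f x (x + r • u))
      (⟪gradient f (x + s • u), u⟫ - ⟪gradient f x, u⟫) s := by
  simp only [bregman, add_sub_cancel_left, inner_smul_right]
  simpa only [one_mul] using ((hasDerivAt_line_inner (hf _).hasGradientAt).sub_const (f x)).fun_sub
    ((hasDerivAt_id' s).mul_const ⟪gradient f x, u⟫)

lemma tendsto_bregman_div_sq (hf : ContDiff ℝ 2 f) (x u : E) :
    Tendsto (fun s : ℝ => bregman f x (x + s • u) / s ^ 2) (𝓝[≠] 0)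
      (𝓝 (⟪fderiv ℝ (gradient f) x u, u⟫ / 2)) := by
  have hd := hasDerivAt_bregman_line (hf.differentiable (by simp)) x u
  have hgrad : HasDerivAt (fun s : ℝ => ⟪gradient f (x + s • u), u⟫)
      ⟪fderiv ℝ (gradient f) x u, u⟫ 0 := by
    have hx : HasFDerivAt (gradient f) (fderiv ℝ (gradient f) x) (x + (0 : ℝ) • u) := by
      rw [zero_smul, add_zero]
      exact ((contDiff_gradient hf (m := 1) (by norm_num)).differentiable (by simp) x).hasFDerivAt
    exact hasDerivAt_inner_line hx u
  refine HasDerivAt.lhopital_zero_nhdsNE (g' := fun s => 2 * s) (.of_forall hd)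
    (.of_forall fun s => by simpa using hasDerivAt_pow 2 s)
    (by filter_upwards [self_mem_nhdsWithin] with s hs using mul_ne_zero two_ne_zero hs) ?_ ?_ ?_
  · refine Tendsto.mono_left ?_ nhdsWithin_le_nhds
    simpa [ContinuousAt, bregman] using (hd 0).continuousAt
  · exact (by simpa using (continuous_pow 2).tendsto (0 : ℝ) : Tendsto _ _ _).mono_left
      nhdsWithin_le_nhds
  · refine ((hasDerivAt_iff_tendsto_slope_zero.mp hgrad).div_const 2).congr fun s => ?_
    simp only [zero_add, zero_smul, add_zero, smul_eq_mul]
    rw [inv_mul_eq_div, div_div, mul_comm s 2]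

variable [FiniteDimensional ℝ E]

lemma exists_mul_sq_le_bregman (hf : ContDiff ℝ 2 f) (hconv : ConvexOn ℝ Set.univ f) {x : E}
    (hpos : ∀ u ≠ 0, 0 < ⟪fderiv ℝ (gradient f) x u, u⟫) :
    ∃ c > 0, ∃ r > 0, ∀ w, ‖w‖ ≤ r → c * ‖w‖ ^ 2 ≤ bregman f x (x + w) := by
  obtain ⟨c, hc, hcoercive⟩ := exists_mul_sq_le_inner (isSymmetric_fderiv_gradient hf x) hpos
  have hd := ((contDiff_gradient hf (m := 1) (by norm_num)).differentiable (by simp) x).hasFDerivAt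
  obtain ⟨r, hr, hball⟩ := Metric.eventually_nhds_iff_ball.mp
    ((hasFDerivAt_iff_isLittleO_nhds_zero.mp hd).def (half_pos hc))
  have hquad : ∀ v ∈ Metric.ball (0 : E) r,
      c / 2 * ‖v‖ ^ 2 ≤ bregman f x (x + (2 : ℝ) • v) := by
    intro v hv
    set R := gradient f (x + v) - gradient f x - fderiv ℝ (gradient f) x v with hR
    have hremainder : |⟪R, v⟫| ≤ c / 2 * ‖v‖ * ‖v‖ :=
      (abs_real_inner_le_norm R v).trans (by gcongr; exact hball v hv)
    have hinner : ⟪gradient f (x + v) - gradient f x, v⟫ =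
        ⟪fderiv ℝ (gradient f) x v, v⟫ + ⟪R, v⟫ := by
      rw [← inner_add_left, hR, add_sub_cancel]
    have hmono := inner_gradient_sub_le_bregman (hf.differentiable (by simp)) hconv x v
    have := hcoercive v
    simp only [ContinuousLinearMap.coe_coe] at this
    linarith [neg_abs_le ⟪R, v⟫]
  refine ⟨c / 8, by positivity, r, hr, fun w hw => ?_⟩
  have hnorm : ‖(2⁻¹ : ℝ) • w‖ = ‖w‖ / 2 := by
    rw [norm_smul, norm_inv, Real.norm_ofNat, inv_mul_eq_div]
  have h := hquad ((2⁻¹ : ℝ) • w) (by rw [mem_ball_zero_iff, hnorm]; linarith)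
  rw [hnorm, smul_inv_smul₀ two_ne_zero] at h
  linarith

lemma exists_mul_norm_sub_le_bregman_div_sq (hf : ContDiff ℝ 2 f)
    (hconv : ConvexOn ℝ Set.univ f) {x : E}
    (hpos : ∀ u ≠ 0, 0 < ⟪fderiv ℝ (gradient f) x u, u⟫) :
    ∃ a > 0, ∃ b, ∀ w, ∀ s : ℝ, 0 < s → s ≤ 1 →
      a * ‖w‖ - b ≤ bregman f x (x + s • w) / s ^ 2 := by
  obtain ⟨c, hc, r, hr, hquad⟩ := exists_mul_sq_le_bregman hf hconv hpos
  refine ⟨c * r, by positivity, c * r ^ 2, fun w s hs hs1 => ?_⟩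
  rw [le_div_iff₀ (by positivity)]
  have hnorm : ‖s • w‖ = s * ‖w‖ := norm_smul_of_nonneg hs.le w
  rcases le_total ‖s • w‖ r with hw | hw
  · have h := hquad _ hw
    rw [hnorm, mul_pow] at h
    nlinarith [mul_nonneg (mul_pos hc (pow_pos hs 2)).le
      (by nlinarith [sq_nonneg (2 * ‖w‖ - r)] : 0 ≤ ‖w‖ ^ 2 - r * ‖w‖ + r ^ 2)]
  · have hn : 0 < ‖s • w‖ := hr.trans_le hw
    have hscaled : ‖(r / ‖s • w‖) • s • w‖ = r := by
      rw [norm_smul_of_nonneg (by positivity), div_mul_cancel₀ _ hn.ne']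
    have h := (hquad _ hscaled.le).trans
      (bregman_smul_le hconv x (s • w) (by positivity) ((div_le_one hn).mpr hw))
    rw [hscaled, div_mul_eq_mul_div, le_div_iff₀ hn] at h
    have hlinear : c * r * (s * ‖w‖) ≤ bregman f x (x + s • w) := by
      refine le_of_mul_le_mul_left ?_ hr
      rw [← hnorm]
      linarith
    have hs2 : s ^ 2 ≤ s := by nlinarith
    nlinarith [mul_le_mul_of_nonneg_left hs2 (by positivity : 0 ≤ c * r * ‖w‖),
      (by positivity : 0 ≤ c * r ^ 2 * s ^ 2)]

lemma isBounded_section (hf : ContDiff ℝ 2 f) (hconv : ConvexOn ℝ Set.univ f) {x : E}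
    (hpos : ∀ u ≠ 0, 0 < ⟪fderiv ℝ (gradient f) x u, u⟫) (k : ℝ) :
    Bornology.IsBounded {y | bregman f x y < k} := by
  obtain ⟨a, ha, b, hgrowth⟩ := exists_mul_norm_sub_le_bregman_div_sq hf hconv hpos
  refine Metric.isBounded_closedBall.subset
    (fun y hy => ?_ : _ ⊆ Metric.closedBall x ((k + b) / a))
  have h := hgrowth (y - x) 1 one_pos le_rfl
  rw [one_smul, add_sub_cancel, one_pow, div_one] at h
  rw [mem_closedBall_iff_norm, le_div_iff₀ ha]
  rw [Set.mem_ofPred_eq] at hy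
  linarith

end Bregman

section BregmanIntegrals

lemma integrable_exp_neg_mul_norm {E : Type*} [NormedAddCommGroup E] [NormedSpace ℝ E]
    [FiniteDimensional ℝ E] [MeasurableSpace E] [BorelSpace E] (μ : Measure E)
    [μ.IsAddHaarMeasure] {a : ℝ} (ha : 0 < a) :
    Integrable (fun u : E => Real.exp (-(a * ‖u‖))) μ := by
  set N := Module.finrank ℝ E + 1 with hN
  have hpoly : Integrable (fun u : E => (1 + ‖u‖) ^ (-(N : ℝ))) μ :=
    integrable_one_add_norm (by rw [hN]; push_cast; linarith)
  refine (hpoly.const_mul (Real.exp a * N.factorial / a ^ N)).mono' (by fun_prop)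
    (.of_forall fun u => ?_)
  have h0 : 0 < 1 + ‖u‖ := by positivity
  have hexp : (a * (1 + ‖u‖)) ^ N / N.factorial ≤ Real.exp a * Real.exp (a * ‖u‖) := by
    rw [← Real.exp_add, ← mul_one_add]
    exact Real.pow_div_factorial_le_exp _ (by positivity) N
  rw [Real.norm_of_nonneg (Real.exp_pos _).le, Real.rpow_neg h0.le, Real.rpow_natCast,
    Real.exp_neg, inv_le_iff_one_le_mul₀ (Real.exp_pos _)]
  calc (1 : ℝ) ≤ Real.exp a * Real.exp (a * ‖u‖) / ((a * (1 + ‖u‖)) ^ N / N.factorial) :=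
        (one_le_div (by positivity)).mpr hexp
    _ = Real.exp a * N.factorial / a ^ N * ((1 + ‖u‖) ^ N)⁻¹ * Real.exp (a * ‖u‖) := by
        rw [mul_pow]
        field_simp

variable {E : Type*} [NormedAddCommGroup E] [InnerProductSpace ℝ E] [MeasurableSpace E]
  {μ : Measure E} {f : E → ℝ}

lemma setIntegral_section_eq [CompleteSpace E] (f : E → ℝ) (x : E) (k : ℝ) :
    ∫ y in {y | f y < f x + ⟪gradient f x, y - x⟫ + k},
      (f x + ⟪gradient f x, y - x⟫ + k - f y) ∂μ =
    ∫ y in {y | bregman f x y < k}, (k - bregman f x y) ∂μ := by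
  have hset : {y | f y < f x + ⟪gradient f x, y - x⟫ + k} = {y | bregman f x y < k} := by
    ext y
    simp only [bregman, Set.mem_ofPred_eq]
    constructor <;> intro h <;> linarith
  rw [hset]
  congr! 2 with y
  rw [bregman]
  ring

variable [FiniteDimensional ℝ E] [BorelSpace E]

lemma lintegral_ofReal_sub_bregman [IsFiniteMeasureOnCompacts μ] (hf : ContDiff ℝ 2 f)
    (hconv : ConvexOn ℝ Set.univ f) {x : E}
    (hpos : ∀ u ≠ 0, 0 < ⟪fderiv ℝ (gradient f) x u, u⟫) (k : ℝ) :
    ∫⁻ y, ENNReal.ofReal (k - bregman f x y) ∂μ =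
      ENNReal.ofReal (∫ y in {y | bregman f x y < k}, (k - bregman f x y) ∂μ) := by
  have hcont := continuous_bregman hf.continuous x
  have hmeas : MeasurableSet {y | bregman f x y < k} :=
    (isOpen_lt hcont continuous_const).measurableSet
  have hint : IntegrableOn (fun y => k - bregman f x y) {y | bregman f x y < k} μ :=
    ((continuous_const.sub hcont).continuousOn.integrableOn_compact
      (isBounded_section hf hconv hpos k).isCompact_closure).mono_set subset_closure
  rw [ofReal_integral_eq_lintegral_ofReal hint, ← lintegral_indicator hmeas]
  · refine lintegral_congr fun y => ?_
    by_cases hy : bregman f x y < k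
    · rw [Set.indicator_of_mem (by exact hy)]
    · rw [Set.indicator_of_notMem (by exact hy), ENNReal.ofReal_of_nonpos (by linarith)]
  · filter_upwards [ae_restrict_mem hmeas] with y hy
    exact sub_nonneg.mpr (le_of_lt hy)

variable [μ.IsAddHaarMeasure]

lemma integral_exp_neg_bregman_congr (hf : ContDiff ℝ 2 f) (hconv : ConvexOn ℝ Set.univ f)
    (hpos : ∀ x, ∀ u ≠ 0, 0 < ⟪fderiv ℝ (gradient f) x u, u⟫) {φ : ℝ → ℝ}
    (hV : ∀ x k, 0 < k → ∫ y in {y | f y < f x + ⟪gradient f x, y - x⟫ + k},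
      (f x + ⟪gradient f x, y - x⟫ + k - f y) ∂μ = φ k) (x x' : E) {t : ℝ} (ht : 0 < t) :
    ∫ y, Real.exp (-(t * bregman f x y)) ∂μ = ∫ y, Real.exp (-(t * bregman f x' y)) ∂μ := by
  refine integral_exp_neg_mul_congr (continuous_bregman hf.continuous x).measurable
    (continuous_bregman hf.continuous x').measurable (fun k => ?_) ht
  rcases le_or_gt k 0 with hk | hk
  · have hD := bregman_nonneg (hf.differentiable (by simp)) hconv
    refine lintegral_congr fun y => ?_
    rw [ENNReal.ofReal_of_nonpos (by linarith [hD x y]),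
      ENNReal.ofReal_of_nonpos (by linarith [hD x' y])]
  · rw [lintegral_ofReal_sub_bregman hf hconv (hpos x), ← setIntegral_section_eq, hV x k hk,
      lintegral_ofReal_sub_bregman hf hconv (hpos x'), ← setIntegral_section_eq, hV x' k hk]

lemma integrable_exp_neg_bregman (hf : ContDiff ℝ 2 f) (hconv : ConvexOn ℝ Set.univ f) {x : E}
    (hpos : ∀ u ≠ 0, 0 < ⟪fderiv ℝ (gradient f) x u, u⟫) {t : ℝ} (ht : 0 < t) :
    Integrable (fun y => Real.exp (-(t * bregman f x y))) μ := by
  obtain ⟨a, ha, b, hgrowth⟩ := exists_mul_norm_sub_le_bregman_div_sq hf hconv hpos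
  have hcont := continuous_bregman hf.continuous x
  suffices h : Integrable (fun w => Real.exp (-(t * bregman f x (x + w)))) μ by
    simpa using h.comp_add_left (-x)
  refine ((integrable_exp_neg_mul_norm μ (mul_pos ht ha)).const_mul (Real.exp (t * b))).mono'
    (by fun_prop) (.of_forall fun w => ?_)
  have h := mul_le_mul_of_nonneg_left (hgrowth w 1 one_pos le_rfl) ht.le
  rw [one_smul, one_pow, div_one] at h
  rw [Real.norm_of_nonneg (Real.exp_pos _).le, ← Real.exp_add, Real.exp_le_exp]
  linarith

lemma tendsto_integral_exp_neg_bregman_div_sq (hf : ContDiff ℝ 2 f)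
    (hconv : ConvexOn ℝ Set.univ f) {x : E}
    (hpos : ∀ u ≠ 0, 0 < ⟪fderiv ℝ (gradient f) x u, u⟫) :
    Tendsto (fun s : ℝ => ∫ u, Real.exp (-(bregman f x (x + s • u) / s ^ 2)) ∂μ) (𝓝[>] 0)
      (𝓝 (∫ u, Real.exp (-(⟪fderiv ℝ (gradient f) x u, u⟫ / 2)) ∂μ)) := by
  obtain ⟨a, ha, b, hgrowth⟩ := exists_mul_norm_sub_le_bregman_div_sq hf hconv hpos
  have hcont := continuous_bregman hf.continuous x
  refine tendsto_integral_filter_of_dominated_convergence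
    (fun u => Real.exp b * Real.exp (-(a * ‖u‖))) (.of_forall fun s => by fun_prop) ?_
    ((integrable_exp_neg_mul_norm μ ha).const_mul _) (.of_forall fun u => ?_)
  · filter_upwards [Ioc_mem_nhdsGT (zero_lt_one' ℝ)] with s hs
    refine .of_forall fun u => ?_
    rw [Real.norm_of_nonneg (Real.exp_pos _).le, ← Real.exp_add, Real.exp_le_exp]
    linarith [hgrowth u s hs.1 hs.2]
  · have h := (tendsto_bregman_div_sq hf x u).mono_left
      (nhdsWithin_mono 0 fun s (hs : 0 < s) => hs.ne')
    exact (Real.continuous_exp.tendsto _).comp h.neg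

lemma integral_exp_neg_inner_fderiv_gradient_congr (hf : ContDiff ℝ 2 f)
    (hconv : ConvexOn ℝ Set.univ f) {x x' : E}
    (hx : ∀ u ≠ 0, 0 < ⟪fderiv ℝ (gradient f) x u, u⟫)
    (hx' : ∀ u ≠ 0, 0 < ⟪fderiv ℝ (gradient f) x' u, u⟫)
    (hlaplace : ∀ t, 0 < t → ∫ y, Real.exp (-(t * bregman f x y)) ∂μ =
      ∫ y, Real.exp (-(t * bregman f x' y)) ∂μ) :
    ∫ u, Real.exp (-(⟪fderiv ℝ (gradient f) x u, u⟫ / 2)) ∂μ =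
      ∫ u, Real.exp (-(⟪fderiv ℝ (gradient f) x' u, u⟫ / 2)) ∂μ := by
  have hscale (z : E) (s : ℝ) : ∫ u, Real.exp (-(bregman f z (z + s • u) / s ^ 2)) ∂μ =
      |(s ^ Module.finrank ℝ E)⁻¹| * ∫ y, Real.exp (-((s ^ 2)⁻¹ * bregman f z y)) ∂μ := by
    simp_rw [inv_mul_eq_div]
    rw [Measure.integral_comp_smul μ (fun u => Real.exp (-(bregman f z (z + u) / s ^ 2))),
      integral_add_left_eq_self (fun y => Real.exp (-(bregman f z y / s ^ 2))), smul_eq_mul]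
  refine tendsto_nhds_unique_of_eventuallyEq
    (tendsto_integral_exp_neg_bregman_div_sq hf hconv hx)
    (tendsto_integral_exp_neg_bregman_div_sq hf hconv hx') ?_
  filter_upwards [self_mem_nhdsWithin] with s (hs : 0 < s)
  rw [hscale, hscale, hlaplace _ (by positivity)]

end BregmanIntegrals

section GaussianIntegrals

variable {E : Type*} [NormedAddCommGroup E] [InnerProductSpace ℝ E] [FiniteDimensional ℝ E]
  [MeasurableSpace E] [BorelSpace E] (μ : Measure E) [μ.IsAddHaarMeasure]

lemma integral_comp_linearMap {S : E →ₗ[ℝ] E} (hS : LinearMap.det S ≠ 0) {F : E → ℝ}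
    (hF : Continuous F) : ∫ u, F (S u) ∂μ = |LinearMap.det S|⁻¹ * ∫ u, F u ∂μ := by
  have hS' : Continuous S := S.continuous_of_finiteDimensional
  rw [← integral_map hS'.measurable.aemeasurable hF.aestronglyMeasurable,
    Measure.map_linearMap_addHaar_eq_smul_addHaar μ hS, integral_smul_measure,
    ENNReal.toReal_ofReal (abs_nonneg _), abs_inv, smul_eq_mul]

lemma det_mul_integral_exp_neg_inner_sq {T : E →ₗ[ℝ] E} (hsymm : T.IsSymmetric)
    (hT : ∀ u ≠ 0, 0 < ⟪T u, u⟫) :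
    LinearMap.det T * (∫ u, Real.exp (-(⟪T u, u⟫ / 2)) ∂μ) ^ 2 =
      (∫ u, Real.exp (-(‖u‖ ^ 2 / 2)) ∂μ) ^ 2 := by
  obtain ⟨S, rfl⟩ := exists_eq_adjoint_comp_self ⟨hsymm, inner_map_self_nonneg hT⟩
  have hdet : LinearMap.det (LinearMap.adjoint S ∘ₗ S) = |LinearMap.det S| ^ 2 := by
    rw [LinearMap.det_comp, det_adjoint, sq_abs, sq]
  have hS : LinearMap.det S ≠ 0 := fun h => det_ne_zero_of_inner_pos hT (by simp [hdet, h])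
  simp_rw [hdet, LinearMap.comp_apply, LinearMap.adjoint_inner_left, real_inner_self_eq_norm_sq]
  rw [integral_comp_linearMap μ hS (F := fun u => Real.exp (-(‖u‖ ^ 2 / 2))) (by fun_prop)]
  field_simp

lemma integral_exp_neg_norm_sq_pos : 0 < ∫ u, Real.exp (-(‖u‖ ^ 2 / 2)) ∂μ := by
  refine integral_exp_pos (((integrable_exp_neg_mul_norm μ one_pos).const_mul
    (Real.exp (1 / 2))).mono' (by fun_prop) (.of_forall fun u => ?_))
  rw [Real.norm_of_nonneg (Real.exp_pos _).le, ← Real.exp_add, Real.exp_le_exp]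
  linarith [sq_nonneg (‖u‖ - 1)]

lemma det_eq_of_integral_exp_neg_inner_eq {T T' : E →ₗ[ℝ] E} (hsymm : T.IsSymmetric)
    (hT : ∀ u ≠ 0, 0 < ⟪T u, u⟫) (hsymm' : T'.IsSymmetric) (hT' : ∀ u ≠ 0, 0 < ⟪T' u, u⟫)
    (h : ∫ u, Real.exp (-(⟪T u, u⟫ / 2)) ∂μ = ∫ u, Real.exp (-(⟪T' u, u⟫ / 2)) ∂μ) :
    LinearMap.det T = LinearMap.det T' := by
  have hdet := det_mul_integral_exp_neg_inner_sq μ hsymm hT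
  have hdet' := det_mul_integral_exp_neg_inner_sq μ hsymm' hT'
  have hne : (∫ u, Real.exp (-(⟪T' u, u⟫ / 2)) ∂μ) ^ 2 ≠ 0 :=
    right_ne_zero_of_mul (hdet'.trans_ne (pow_pos (integral_exp_neg_norm_sq_pos μ) 2).ne')
  rw [← hdet', h] at hdet
  exact mul_right_cancel₀ hne hdet

variable {μ}

lemma det_fderiv_gradient_congr {f : E → ℝ} (hf : ContDiff ℝ 2 f)
    (hconv : ConvexOn ℝ Set.univ f) {x x' : E}
    (hx : ∀ u ≠ 0, 0 < ⟪fderiv ℝ (gradient f) x u, u⟫)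
    (hx' : ∀ u ≠ 0, 0 < ⟪fderiv ℝ (gradient f) x' u, u⟫)
    (hlaplace : ∀ t, 0 < t → ∫ y, Real.exp (-(t * bregman f x y)) ∂μ =
      ∫ y, Real.exp (-(t * bregman f x' y)) ∂μ) :
    (fderiv ℝ (gradient f) x).det = (fderiv ℝ (gradient f) x').det :=
  det_eq_of_integral_exp_neg_inner_eq μ (isSymmetric_fderiv_gradient hf x) hx
    (isSymmetric_fderiv_gradient hf x') hx'
    (integral_exp_neg_inner_fderiv_gradient_congr hf hconv hx hx' hlaplace)

end GaussianIntegrals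

section ConditionalPositivity

/-- Conditional positivity of the semigroup kernel `(p, q) ↦ K (p + q)`: it is nonnegative on
weights of total mass zero, for all finite families of nodes whose pairwise sums lie in `U`. -/
def ConditionallyPositiveOn {E : Type*} [AddCommGroup E] (U : Set E) (K : E → ℝ) : Prop :=
  ∀ ⦃ι : Type⦄ [Fintype ι] (c : ι → ℝ) (p : ι → E), ∑ i, c i = 0 → (∀ i j, p i + p j ∈ U) →
    0 ≤ ∑ i, ∑ j, c i * c j * K (p i + p j)

lemma nonneg_of_forall_sum_exp_nonneg {ι : Type*} (s : Finset ι) (a b : ι → ℝ)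
    (hsum : ∑ i ∈ s, a i = 0) (h : ∀ t, 0 < t → 0 ≤ ∑ i ∈ s, a i * Real.exp (t * b i)) :
    0 ≤ ∑ i ∈ s, a i * b i := by
  have hd : HasDerivAt (fun t => ∑ i ∈ s, a i * Real.exp (t * b i)) (∑ i ∈ s, a i * b i) 0 := by
    refine HasDerivAt.fun_sum fun i _ => ?_
    simpa using (((hasDerivAt_id' (0 : ℝ)).mul_const (b i)).exp).const_mul (a i)
  refine ge_of_tendsto hd.tendsto_slope_zero_right ?_
  filter_upwards [self_mem_nhdsWithin] with t (ht : 0 < t)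
  simp only [zero_add, zero_mul, Real.exp_zero, mul_one, hsum, sub_zero, smul_eq_mul]
  exact mul_nonneg (inv_pos.mpr ht).le (h t ht)

variable {E : Type*} [NormedAddCommGroup E] [InnerProductSpace ℝ E]

lemma sum_mul_integral_exp_inner_nonneg [MeasurableSpace E] {μ : Measure E} {w : E → ℝ}
    (hw : ∀ y, 0 ≤ w y) {ι : Type*} [Fintype ι] (c : ι → ℝ) (p : ι → E)
    (hint : ∀ i j, Integrable (fun y => Real.exp ⟪p i + p j, y⟫ * w y) μ) :
    0 ≤ ∑ i, ∑ j, c i * c j * ∫ y, Real.exp ⟪p i + p j, y⟫ * w y ∂μ := by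
  have hsq (y : E) : ∑ i, ∑ j, c i * c j * (Real.exp ⟪p i + p j, y⟫ * w y) =
      (∑ i, c i * Real.exp ⟪p i, y⟫) ^ 2 * w y := by
    simp_rw [sq, Finset.sum_mul_sum, Finset.sum_mul, inner_add_left, Real.exp_add]
    exact Finset.sum_congr rfl fun i _ => Finset.sum_congr rfl fun j _ => by ring
  calc 0 ≤ ∫ y, (∑ i, c i * Real.exp ⟪p i, y⟫) ^ 2 * w y ∂μ :=
        integral_nonneg fun y => mul_nonneg (sq_nonneg _) (hw y)
    _ = ∑ i, ∑ j, c i * c j * ∫ y, Real.exp ⟪p i + p j, y⟫ * w y ∂μ := by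
        simp_rw [← hsq]
        rw [integral_finsetSum _ fun i _ =>
          integrable_finsetSum _ fun j _ => (hint i j).const_mul _]
        refine Finset.sum_congr rfl fun i _ => ?_
        rw [integral_finsetSum _ fun j _ => (hint i j).const_mul _]
        exact Finset.sum_congr rfl fun j _ => integral_const_mul _ _

lemma conditionallyPositiveOn_of_exp_mul_eq_integral [MeasurableSpace E] {μ : Measure E}
    {U : Set E} {K f : E → ℝ} {ψ : ℝ → ℝ} (hψ : ∀ t, 0 < t → 0 < ψ t)
    (hint : ∀ θ ∈ U, ∀ t, 0 < t → Integrable (fun y => Real.exp (t * (⟪θ, y⟫ - f y))) μ)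
    (hK : ∀ θ ∈ U, ∀ t, 0 < t →
      ∫ y, Real.exp (t * (⟪θ, y⟫ - f y)) ∂μ = Real.exp (t * K θ) * ψ t) :
    ConditionallyPositiveOn U K := by
  intro ι _ c p hc hp
  simp_rw [← Fintype.sum_prod_type']
  refine nonneg_of_forall_sum_exp_nonneg _ _ _ ?_ fun t ht => ?_
  · rw [Fintype.sum_prod_type' (f := fun i j => c i * c j), ← Finset.sum_mul_sum, hc, zero_mul]
  have hsplit (i j : ι) (y : E) : Real.exp (t * (⟪p i + p j, y⟫ - f y)) =
      Real.exp ⟪t • p i + t • p j, y⟫ * Real.exp (-(t * f y)) := by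
    rw [← smul_add, real_inner_smul_left, ← Real.exp_add]
    ring_nf
  have h := sum_mul_integral_exp_inner_nonneg (μ := μ) (fun y => (Real.exp_pos (-(t * f y))).le) c
    (fun i => t • p i) fun i j => by simpa only [hsplit] using hint _ (hp i j) t ht
  simp_rw [← hsplit, hK _ (hp _ _) t ht, ← mul_assoc, ← Finset.sum_mul] at h
  rw [Fintype.sum_prod_type' (f := fun i j => c i * c j * Real.exp (t * K (p i + p j)))]
  exact nonneg_of_mul_nonneg_left h (hψ t ht)

end ConditionalPositivity

section Legendre

variable {E : Type*} [NormedAddCommGroup E] [InnerProductSpace ℝ E] [CompleteSpace E]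
  {f : E → ℝ} {g : E → E}

/-- The Legendre transform of a convex function `f`, computed through a right inverse `g` of its
gradient: at `θ` the supremum of `⟪θ, y⟫ - f y` is attained at `y = g θ`. -/
noncomputable def legendreVia (f : E → ℝ) (g : E → E) (θ : E) : ℝ := ⟪θ, g θ⟫ - f (g θ)

lemma inner_sub_eq_legendreVia_sub_bregman {θ : E} (hθ : gradient f (g θ) = θ) (y : E) :
    ⟪θ, y⟫ - f y = legendreVia f g θ - bregman f (g θ) y := by
  rw [legendreVia, bregman, hθ, inner_sub_right]
  ring

lemma hasGradientAt_legendreVia {θ : E} (hf : DifferentiableAt ℝ f (g θ))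
    (hg : DifferentiableAt ℝ g θ) (hθ : gradient f (g θ) = θ) :
    HasGradientAt (legendreVia f g) (g θ) θ := by
  have h := ((hasFDerivAt_id θ).inner ℝ hg.hasFDerivAt).sub
    (hf.hasFDerivAt.comp θ hg.hasFDerivAt)
  refine hasGradientAt_iff_hasFDerivAt.mpr (h.congr_fderiv ?_)
  ext v
  have hchain : fderiv ℝ f (g θ) (fderiv ℝ g θ v) = ⟪θ, fderiv ℝ g θ v⟫ := by
    rw [← inner_gradient_left, hθ]
  simp [hchain, real_inner_comm]

lemma conditionallyPositiveOn_legendreVia [MeasurableSpace E] {μ : Measure E} [NeZero μ]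
    {U : Set E} (hg : ∀ θ ∈ U, gradient f (g θ) = θ)
    (hint : ∀ x t, 0 < t → Integrable (fun y => Real.exp (-(t * bregman f x y))) μ)
    (hlaplace : ∀ x x' t, 0 < t → ∫ y, Real.exp (-(t * bregman f x y)) ∂μ =
      ∫ y, Real.exp (-(t * bregman f x' y)) ∂μ) :
    ConditionallyPositiveOn U (legendreVia f g) := by
  have hexp : ∀ θ ∈ U, ∀ t y, Real.exp (t * (⟪θ, y⟫ - f y)) =
      Real.exp (t * legendreVia f g θ) * Real.exp (-(t * bregman f (g θ) y)) := by
    intro θ hθ t y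
    rw [inner_sub_eq_legendreVia_sub_bregman (hg θ hθ), ← Real.exp_add]
    ring_nf
  refine conditionallyPositiveOn_of_exp_mul_eq_integral (μ := μ) (f := f)
    (ψ := fun t => ∫ y, Real.exp (-(t * bregman f 0 y)) ∂μ)
    (fun t ht => integral_exp_pos (hint 0 t ht)) (fun θ hθ t ht => ?_) fun θ hθ t ht => ?_
  · simpa only [hexp θ hθ] using (hint (g θ) t ht).const_mul _
  · simp_rw [hexp θ hθ]
    rw [integral_const_mul, hlaplace (g θ) 0 t ht]

end Legendre

section Lines

variable {E F : Type*} [NormedAddCommGroup E] [NormedSpace ℝ E] [NormedAddCommGroup F]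
  [NormedSpace ℝ F] {U : Set E} {G : E → F} {x : E}

lemma tendsto_add_smul (x v : E) : Tendsto (fun r : ℝ => x + r • v) (𝓝 0) (𝓝 x) :=
  Continuous.tendsto' (by fun_prop) 0 x (by simp)

lemma eventually_add_smul_mem (hU : IsOpen U) (hx : x ∈ U) (v : E) :
    ∀ᶠ r : ℝ in 𝓝 0, x + r • v ∈ U :=
  (tendsto_add_smul x v).eventually (hU.mem_nhds hx)

lemma eventually_hasDerivAt_line (hU : IsOpen U) (hG : DifferentiableOn ℝ G U) (hx : x ∈ U)
    (v : E) : ∀ᶠ r : ℝ in 𝓝 0,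
      HasDerivAt (fun r : ℝ => G (x + r • v)) (fderiv ℝ G (x + r • v) v) r := by
  filter_upwards [eventually_add_smul_mem hU hx v] with r hr
  exact hasDerivAt_line (hG.differentiableAt (hU.mem_nhds hr)).hasFDerivAt

lemma hasDerivAt_fderiv_line (hU : IsOpen U) (hG : ContDiffOn ℝ 2 G U) (hx : x ∈ U) (v : E) :
    HasDerivAt (fun r : ℝ => fderiv ℝ G (x + r • v) v) (fderiv ℝ (fderiv ℝ G) x v v) 0 := by
  have hG' := ((hG.fderiv_of_isOpen hU (m := 1) (by norm_num)).differentiableOn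
    (by simp)).differentiableAt (hU.mem_nhds hx)
  have hline := hasDerivAt_line (s := 0) (v := v) (by simpa using hG'.hasFDerivAt)
  simpa using hline.clm_apply (hasDerivAt_const (0 : ℝ) v)

end Lines

section SecondOrderConditions

lemma second_deriv_nonneg_of_isLocalMin {W W' : ℝ → ℝ} {a s : ℝ} (hmin : IsLocalMin W s)
    (hW : ∀ᶠ r in 𝓝 s, HasDerivAt W (W' r) r) (hW' : HasDerivAt W' a s) : 0 ≤ a := by
  by_contra! ha
  have hderiv : deriv W =ᶠ[𝓝 s] W' := hW.mono fun r hr => hr.deriv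
  have hmax : IsLocalMax W s := isLocalMax_of_deriv_deriv_neg
    (by rwa [hderiv.deriv_eq, hW'.deriv]) hmin.deriv_eq_zero hW.self_of_nhds.continuousAt
  have hconst : W =ᶠ[𝓝 s] fun _ => W s := by
    filter_upwards [hmin, hmax] with r h1 h2 using le_antisymm h2 h1
  have hzero : W' =ᶠ[𝓝 s] fun _ => 0 := by
    filter_upwards [hconst.eventuallyEq_nhds, hW] with r hr hWr
    exact hWr.unique (hr.hasDerivAt_iff.mpr (hasDerivAt_const r _))
  exact ha.ne (hW'.unique (hzero.hasDerivAt_iff.mpr (hasDerivAt_const s 0)))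

lemma second_deriv_nonneg_of_second_difference_nonneg {α α' β β' : ℝ → ℝ} {a b q : ℝ}
    (hα : ∀ᶠ r in 𝓝 0, HasDerivAt α (α' r) r) (hα' : HasDerivAt α' a 0)
    (hβ : ∀ᶠ r in 𝓝 0, HasDerivAt β (β' r) r) (hβ' : HasDerivAt β' b 0)
    (h : ∀ᶠ r in 𝓝 0, 0 ≤ r ^ 2 * q + r * (α r - α 0) + (β 0 - 2 * β r + β (2 * r))) :
    0 ≤ q + α' 0 + b := by
  have hmin : IsLocalMin
      (fun r => r ^ 2 * q + r * (α r - α 0) + (β 0 - 2 * β r + β (2 * r))) 0 := by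
    filter_upwards [h] with r hr
    refine le_trans (le_of_eq ?_) hr
    rw [mul_zero]
    ring
  have hdouble : HasDerivAt (fun r : ℝ => 2 * r) 2 0 := by
    simpa using (hasDerivAt_id' (0 : ℝ)).const_mul 2
  have hβdouble : ∀ᶠ r in 𝓝 0, HasDerivAt (fun r => β (2 * r)) (β' (2 * r) * 2) r := by
    have htwo : Tendsto (fun r : ℝ => 2 * r) (𝓝 0) (𝓝 0) :=
      Continuous.tendsto' (by fun_prop) 0 0 (mul_zero 2)
    filter_upwards [htwo.eventually hβ] with r hr
    exact hr.comp r (by simpa using (hasDerivAt_id' r).const_mul 2)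
  have hderiv : ∀ᶠ r in 𝓝 0,
      HasDerivAt (fun r => r ^ 2 * q + r * (α r - α 0) + (β 0 - 2 * β r + β (2 * r)))
        (2 * r * q + (α r - α 0 + r * α' r) + (β' (2 * r) * 2 - 2 * β' r)) r := by
    filter_upwards [hα, hβ, hβdouble] with r hαr hβr hβr'
    refine ((((hasDerivAt_pow 2 r).mul_const q).fun_add ((hasDerivAt_id' r).fun_mul
      (hαr.sub_const (α 0)))).fun_add
      (((hβr.const_mul 2).const_sub (β 0)).fun_add hβr')).congr_deriv ?_
    push_cast
    ring
  have hβdouble' : HasDerivAt (fun r => β' (2 * r)) (b * 2) 0 :=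
    HasDerivAt.comp (h₂ := β') 0 (by simpa using hβ') hdouble
  have hderiv' := ((hdouble.mul_const q).fun_add
    ((hα.self_of_nhds.sub_const (α 0)).fun_add ((hasDerivAt_id' (0 : ℝ)).fun_mul hα'))).fun_add
    ((hβdouble'.mul_const 2).fun_sub (hβ'.const_mul 2))
  have hnonneg := second_deriv_nonneg_of_isLocalMin hmin hderiv hderiv'
  linarith

end SecondOrderConditions

section ConditionalPositivityDerivatives

lemma ConditionallyPositiveOn.sum_second_difference_nonneg {E : Type*} [AddCommGroup E]
    {U : Set E} {K : E → ℝ} (hK : ConditionallyPositiveOn U K) {ι : Type} [Fintype ι]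
    (q u : ι → E) (h₀ : ∀ i j, q i + q j ∈ U)
    (h₁ : ∀ i j, q i + q j + u i ∈ U) (h₂ : ∀ i j, q i + q j + (u i + u j) ∈ U) :
    0 ≤ ∑ i, ∑ j, (K (q i + q j + (u i + u j)) - 2 * K (q i + q j + u i) + K (q i + q j)) := by
  have h := hK (Sum.elim (1 : ι → ℝ) (-1)) (Sum.elim (q + u) q) (by simp) <| by
    rintro (i | i) (j | j)
    · simpa [add_add_add_comm] using h₂ i j
    · simpa [add_right_comm] using h₁ i j
    · simpa [add_assoc, add_left_comm] using h₁ j i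
    · exact h₀ i j
  have hswap : ∑ i, ∑ j, K (q i + (q j + u j)) = ∑ i, ∑ j, K (q i + q j + u i) := by
    rw [Finset.sum_comm]
    exact Finset.sum_congr rfl fun i _ => Finset.sum_congr rfl fun j _ => by congr 1; abel
  simp only [Fintype.sum_sum_type, Sum.elim_inl, Sum.elim_inr, Pi.add_apply, Pi.one_apply,
    Pi.neg_apply, Finset.sum_add_distrib, one_mul, neg_mul, Finset.sum_neg_distrib,
    mul_neg, hswap, add_add_add_comm _ (u _), add_right_comm _ (u _)] at h
  simp only [Finset.sum_add_distrib, Finset.sum_sub_distrib, ← Finset.mul_sum]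
  linarith

variable {E : Type*} [NormedAddCommGroup E] [InnerProductSpace ℝ E]

lemma sum_inner_add_sub_eq_two_mul_sum_inner {ι : Type*} [Fintype ι] {N : ι → ι → E →L[ℝ] E}
    (hN : ∀ i j, N i j = N j i) (u : ι → E) :
    ∑ i, ∑ j, (⟪N i j (u i + u j), u i + u j⟫ - 2 * ⟪N i j (u i), u i⟫) =
      2 * ∑ i, ∑ j, ⟪N i j (u i), u j⟫ := by
  have hdiag : ∑ i, ∑ j, ⟪N i j (u j), u j⟫ = ∑ i, ∑ j, ⟪N i j (u i), u i⟫ := by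
    rw [Finset.sum_comm]
    simp_rw [hN]
  have hcross : ∑ i, ∑ j, ⟪N i j (u j), u i⟫ = ∑ i, ∑ j, ⟪N i j (u i), u j⟫ := by
    rw [Finset.sum_comm]
    simp_rw [hN]
  simp only [map_add, inner_add_left, inner_add_right, Finset.sum_add_distrib,
    Finset.sum_sub_distrib, ← Finset.mul_sum, hdiag, hcross]
  ring

variable [CompleteSpace E] {U : Set E} {K : E → ℝ} {g : E → E}

lemma ConditionallyPositiveOn.sum_inner_fderiv_nonneg (hK : ConditionallyPositiveOn U K)
    (hU : IsOpen U) (hg : ∀ θ ∈ U, HasGradientAt K (g θ) θ)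
    (hg' : ∀ θ ∈ U, DifferentiableAt ℝ g θ) {ι : Type} [Fintype ι] (q u : ι → E)
    (hq : ∀ i j, q i + q j ∈ U) :
    0 ≤ ∑ i, ∑ j, ⟪fderiv ℝ g (q i + q j) (u i), u j⟫ := by
  set W : ℝ → ℝ := fun r => ∑ i, ∑ j, (K (q i + q j + r • (u i + u j)) -
    2 * K (q i + q j + r • u i) + K (q i + q j)) with hW
  have hmem : ∀ᶠ r : ℝ in 𝓝 0, ∀ i j, q i + q j + r • u i ∈ U ∧ q i + q j + r • (u i + u j) ∈ U :=
    eventually_all.mpr fun i => eventually_all.mpr fun j =>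
      (eventually_add_smul_mem hU (hq i j) _).and (eventually_add_smul_mem hU (hq i j) _)
  have hmin : IsLocalMin W 0 := by
    filter_upwards [hmem] with r hr
    have hzero : W 0 = 0 := by
      simp only [hW, zero_smul, add_zero]
      exact Finset.sum_eq_zero fun i _ => Finset.sum_eq_zero fun j _ => by ring
    rw [hzero]
    simpa only [hW, smul_add] using hK.sum_second_difference_nonneg q (fun i => r • u i) hq
      (fun i j => (hr i j).1) fun i j => by simpa only [smul_add] using (hr i j).2
  have hderiv : ∀ᶠ r in 𝓝 0, HasDerivAt W (∑ i, ∑ j,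
      (⟪g (q i + q j + r • (u i + u j)), u i + u j⟫ - 2 * ⟪g (q i + q j + r • u i), u i⟫)) r := by
    filter_upwards [hmem] with r hr
    exact .fun_sum fun i _ => .fun_sum fun j _ =>
      ((hasDerivAt_line_inner (hg _ (hr i j).2)).sub
        ((hasDerivAt_line_inner (hg _ (hr i j).1)).const_mul 2)).add_const _
  have hline (i j : ι) (v : E) : HasDerivAt (fun r : ℝ => ⟪g (q i + q j + r • v), v⟫)
      ⟪fderiv ℝ g (q i + q j) v, v⟫ 0 := by
    refine hasDerivAt_inner_line ?_ v
    rw [zero_smul, add_zero]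
    exact (hg' _ (hq i j)).hasFDerivAt
  have hnonneg := second_deriv_nonneg_of_isLocalMin hmin hderiv
    (.fun_sum fun i _ => .fun_sum fun j _ => (hline i j _).sub ((hline i j _).const_mul 2))
  rw [sum_inner_add_sub_eq_two_mul_sum_inner fun i j => by rw [add_comm]] at hnonneg
  exact nonneg_of_mul_nonneg_right hnonneg two_pos

end ConditionalPositivityDerivatives

section Schur

variable {E : Type*} [NormedAddCommGroup E] [InnerProductSpace ℝ E]

lemma inner_second_deriv_nonneg_of_eventually_nonneg {A A' : ℝ → E →L[ℝ] E} {A'' : E →L[ℝ] E}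
    (hA : ∀ᶠ r in 𝓝 0, HasDerivAt A (A' r) r) (hA' : HasDerivAt A' A'' 0) (a c : E)
    (h : ∀ᶠ r : ℝ in 𝓝 0, 0 ≤ ⟪A 0 (r • a - c), r • a - c⟫ + ⟪A r (r • a - c), c⟫ +
      ⟪A r c, r • a - c⟫ + ⟪A (2 * r) c, c⟫) :
    0 ≤ ⟪A 0 a, a⟫ + ⟪A' 0 a, c⟫ + ⟪A' 0 c, a⟫ + ⟪A'' c, c⟫ := by
  have heval {B : ℝ → E →L[ℝ] E} {B' : E →L[ℝ] E} {s : ℝ} (hB : HasDerivAt B B' s) (u w : E) :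
      HasDerivAt (fun r => ⟪B r u, w⟫) ⟪B' u, w⟫ s := by
    simpa using (hB.clm_apply (hasDerivAt_const s u)).inner ℝ (hasDerivAt_const s w)
  have hnonneg := second_deriv_nonneg_of_second_difference_nonneg (q := ⟪A 0 a, a⟫)
    (hA.mono fun r hr => (heval hr a c).fun_add (heval hr c a))
    ((heval hA' a c).fun_add (heval hA' c a))
    (hA.mono fun r hr => heval hr c c) (heval hA' c c) <| by
      filter_upwards [h] with r hr
      simp only [map_sub, map_smul, inner_sub_left, inner_sub_right, real_inner_smul_left,
        real_inner_smul_right] at hr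
      linarith
  linarith

variable [CompleteSpace E] {U : Set E} {K : E → ℝ} {g : E → E} {θ : E}

lemma ConditionallyPositiveOn.inner_fderiv_fderiv_fderiv_nonneg
    (hK : ConditionallyPositiveOn U K) (hU : IsOpen U) (hg : ∀ θ ∈ U, HasGradientAt K (g θ) θ)
    (hgU : ContDiffOn ℝ 3 g U) (hθ : θ ∈ U) (v a c : E) :
    0 ≤ ⟪fderiv ℝ g θ a, a⟫ + ⟪fderiv ℝ (fderiv ℝ g) θ v a, c⟫ +
      ⟪fderiv ℝ (fderiv ℝ g) θ v c, a⟫ + ⟪fderiv ℝ (fderiv ℝ (fderiv ℝ g)) θ v v c, c⟫ := by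
  have hg2 : ContDiffOn ℝ 2 (fderiv ℝ g) U := hgU.fderiv_of_isOpen hU (by norm_num)
  have h := inner_second_deriv_nonneg_of_eventually_nonneg
    (eventually_hasDerivAt_line hU (hg2.differentiableOn (by simp)) hθ v)
    (hasDerivAt_fderiv_line hU hg2 hθ v) a c ?_
  · simpa using h
  filter_upwards [eventually_add_smul_mem hU hθ v,
    eventually_add_smul_mem hU hθ ((2 : ℝ) • v)] with r hr hr'
  -- The pairwise sums of the nodes `θ / 2` and `θ / 2 + r v` are `θ`, `θ + r v` and `θ + 2 r v`.
  have hhalf : (2⁻¹ : ℝ) • θ + (2⁻¹ : ℝ) • θ = θ := by module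
  have hmid : (2⁻¹ : ℝ) • θ + ((2⁻¹ : ℝ) • θ + r • v) = θ + r • v := by module
  have hmid' : (2⁻¹ : ℝ) • θ + r • v + (2⁻¹ : ℝ) • θ = θ + r • v := by module
  have hend : (2⁻¹ : ℝ) • θ + r • v + ((2⁻¹ : ℝ) • θ + r • v) = θ + (2 * r) • v := by module
  have hsum := hK.sum_inner_fderiv_nonneg hU hg
    (fun θ hθ => (hgU.differentiableOn (by simp)).differentiableAt (hU.mem_nhds hθ))
    ![(2⁻¹ : ℝ) • θ, (2⁻¹ : ℝ) • θ + r • v] ![r • a - c, c] <| by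
      simp only [Fin.forall_fin_two, Matrix.cons_val_zero, Matrix.cons_val_one, hhalf, hmid, hmid',
        hend]
      exact ⟨⟨hθ, hr⟩, hr, by rwa [mul_comm, mul_smul]⟩
  simp only [Fin.sum_univ_two, Matrix.cons_val_zero, Matrix.cons_val_one, hhalf, hmid, hmid',
    hend] at hsum
  simpa only [zero_smul, add_zero, add_assoc] using hsum

lemma ConditionallyPositiveOn.inner_fderiv_comp_le (hK : ConditionallyPositiveOn U K)
    (hU : IsOpen U) (hg : ∀ θ ∈ U, HasGradientAt K (g θ) θ) (hgU : ContDiffOn ℝ 3 g U)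
    (hθ : θ ∈ U) {B : E →L[ℝ] E} (hB : ∀ u, fderiv ℝ g θ (B u) = u) (v c : E) :
    ⟪fderiv ℝ (fderiv ℝ g) θ v (B (fderiv ℝ (fderiv ℝ g) θ v c)), c⟫ ≤
      ⟪fderiv ℝ (fderiv ℝ (fderiv ℝ g)) θ v v c, c⟫ := by
  -- This choice of `a` minimizes the quadratic form in `(a, c)` over `a`.
  have h := hK.inner_fderiv_fderiv_fderiv_nonneg hU hg hgU hθ v
    (-B (fderiv ℝ (fderiv ℝ g) θ v c)) c
  simp only [map_neg, hB, inner_neg_left, inner_neg_right, neg_neg] at h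
  linarith

end Schur

section Jacobi

variable {E : Type*} [NormedAddCommGroup E] [NormedSpace ℝ E] [FiniteDimensional ℝ E]

lemma hasDerivAt_trace {A : ℝ → E →L[ℝ] E} {A' : E →L[ℝ] E} {s : ℝ} (hA : HasDerivAt A A' s) :
    HasDerivAt (fun r => LinearMap.trace ℝ E (A r)) (LinearMap.trace ℝ E A') s :=
  (LinearMap.trace ℝ E ∘ₗ ContinuousLinearMap.coeLM ℝ).toContinuousLinearMap.hasFDerivAt
    |>.comp_hasDerivAt s hA

lemma differentiable_det : Differentiable ℝ (fun T : E →L[ℝ] E => T.det) := by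
  let b := Module.finBasis ℝ E
  have hentry (i j) : Differentiable ℝ (fun T : E →L[ℝ] E => LinearMap.toMatrix b b T i j) :=
    (LinearMap.proj j ∘ₗ LinearMap.proj i ∘ₗ (Matrix.ofLinearEquiv ℝ).symm.toLinearMap ∘ₗ
      (LinearMap.toMatrix b b).toLinearMap ∘ₗ
      ContinuousLinearMap.coeLM ℝ).toContinuousLinearMap.differentiable
  have hdet (T : E →L[ℝ] E) : T.det = (LinearMap.toMatrix b b T).det :=
    (LinearMap.det_toMatrix b T).symm
  simp_rw [hdet, Matrix.det_apply]
  fun_prop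

lemma hasDerivAt_det_one_add_smul (T : E →L[ℝ] E) :
    HasDerivAt (fun r : ℝ => (1 + r • T).det) (LinearMap.trace ℝ E T) 0 := by
  let b := Module.finBasis ℝ E
  set M := LinearMap.toMatrix b b T with hM
  have hdet (r : ℝ) : (1 + r • T).det = 1 + M.trace * r +
      (Matrix.det (1 + (Polynomial.X : Polynomial ℝ) • M.map Polynomial.C)).divX.divX.eval r *
        r ^ 2 := by
    rw [← Matrix.det_one_add_smul, ContinuousLinearMap.det, ← LinearMap.det_toMatrix b]
    simp [hM, LinearMap.toMatrix_one]
  rw [LinearMap.trace_eq_matrix_trace ℝ b, ← hM]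
  simp_rw [hdet]
  simpa using (((hasDerivAt_id' (0 : ℝ)).const_mul M.trace).const_add 1).fun_add
    ((Polynomial.hasDerivAt _ 0).fun_mul (hasDerivAt_pow 2 (0 : ℝ)))

lemma hasDerivAt_det {A : ℝ → E →L[ℝ] E} {A' : E →L[ℝ] E} {s : ℝ} (hA : HasDerivAt A A' s)
    (hs : IsUnit (A s)) : HasDerivAt (fun r => (A r).det)
      ((A s).det * LinearMap.trace ℝ E (Ring.inverse (A s) * A' : E →L[ℝ] E)) s := by
  have hone := (differentiable_det (1 : E →L[ℝ] E)).hasFDerivAt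
  have htrace (T : E →L[ℝ] E) :
      fderiv ℝ (fun T : E →L[ℝ] E => T.det) 1 T = LinearMap.trace ℝ E T :=
    (hasDerivAt_line (s := 0) (by simpa using hone)).unique (hasDerivAt_det_one_add_smul T)
  have hfactor (r : ℝ) : (A r).det = (A s).det * (Ring.inverse (A s) * A r).det := by
    conv_lhs => rw [← Ring.mul_inverse_cancel_left _ (A r) hs]
    exact LinearMap.det_comp _ _
  rw [funext hfactor, ← htrace]
  exact (hone.comp_hasDerivAt_of_eq s (hA.const_mul _)
    (Ring.inverse_mul_cancel _ hs).symm).const_mul _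

lemma trace_inverse_mul_eq_zero_of_det_eventually_const {A : ℝ → E →L[ℝ] E} {A' : E →L[ℝ] E}
    {s : ℝ} (hA : HasDerivAt A A' s) (hs : IsUnit (A s))
    (hdet : ∀ᶠ r in 𝓝 s, (A r).det = (A s).det) :
    LinearMap.trace ℝ E (Ring.inverse (A s) * A' : E →L[ℝ] E) = 0 := by
  have hzero := (hasDerivAt_det hA hs).unique
    (EventuallyEq.hasDerivAt_iff hdet |>.mpr (hasDerivAt_const s _))
  exact (mul_eq_zero.mp hzero).resolve_left
    ((hs.map ContinuousLinearMap.toLinearMapRingHom).map LinearMap.det).ne_zero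

lemma trace_inverse_mul_second_deriv_of_det_eventually_const {A A' : ℝ → E →L[ℝ] E}
    {A'' : E →L[ℝ] E} {s : ℝ} (hA : ∀ᶠ r in 𝓝 s, HasDerivAt A (A' r) r)
    (hA' : HasDerivAt A' A'' s) (hs : IsUnit (A s))
    (hdet : ∀ᶠ r in 𝓝 s, (A r).det = (A s).det) :
    LinearMap.trace ℝ E (Ring.inverse (A s) * A'' : E →L[ℝ] E) =
      LinearMap.trace ℝ E
        (Ring.inverse (A s) * (A' s * Ring.inverse (A s) * A' s) : E →L[ℝ] E) := by
  have hAs := hA.self_of_nhds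
  have hunit : ∀ᶠ r in 𝓝 s, IsUnit (A r) :=
    hAs.continuousAt.eventually (Units.isOpen.mem_nhds hs)
  have htrace : ∀ᶠ r in 𝓝 s, LinearMap.trace ℝ E (Ring.inverse (A r) * A' r : E →L[ℝ] E) = 0 := by
    filter_upwards [hA, hunit, hdet.eventually_nhds] with r hr hur hdr
    exact trace_inverse_mul_eq_zero_of_det_eventually_const hr hur
      (hdr.mono fun r' h => h.trans hdr.self_of_nhds.symm)
  have hinverse : HasDerivAt (fun r => Ring.inverse (A r))
      (-(Ring.inverse (A s) * A' s * Ring.inverse (A s))) s := by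
    obtain ⟨u, hu⟩ := hs
    have h := hasFDerivAt_ringInverse (𝕜 := ℝ) u
    rw [hu] at h
    refine (h.comp_hasDerivAt s hAs).congr_deriv ?_
    simp [← hu]
  have hzero := (hasDerivAt_trace (hinverse.fun_mul hA')).unique
    (EventuallyEq.hasDerivAt_iff htrace |>.mpr (hasDerivAt_const s _))
  rw [neg_mul, ContinuousLinearMap.toLinearMap_add, ContinuousLinearMap.toLinearMap_neg, map_add,
    map_neg] at hzero
  rw [← mul_assoc, ← mul_assoc]
  linarith

end Jacobi

section InverseOperators

variable {E : Type*} [NormedAddCommGroup E]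

lemma apply_inverse_apply [NormedSpace ℝ E] {T : E →L[ℝ] E} (hT : IsUnit T) (u : E) :
    T (Ring.inverse T u) = u :=
  congrArg (· u) (Ring.mul_inverse_cancel T hT)

lemma det_ringInverse [NormedSpace ℝ E] {T : E →L[ℝ] E} (hT : IsUnit T) :
    (Ring.inverse T).det = T.det⁻¹ := by
  refine eq_inv_of_mul_eq_one_left ?_
  have h : (Ring.inverse T * T).det = (Ring.inverse T).det * T.det := LinearMap.det_comp _ _
  rw [← h, Ring.inverse_mul_cancel T hT]
  exact LinearMap.det_id

variable [InnerProductSpace ℝ E]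

lemma isSymmetric_inverse {T : E →L[ℝ] E} (hsymm : (T : E →ₗ[ℝ] E).IsSymmetric)
    (hT : IsUnit T) : ((Ring.inverse T : E →L[ℝ] E) : E →ₗ[ℝ] E).IsSymmetric := fun u v => by
  have h := hsymm (Ring.inverse T u) (Ring.inverse T v)
  simp only [ContinuousLinearMap.coe_coe, apply_inverse_apply hT] at h ⊢
  exact h.symm

lemma isPositive_conj_of_isSymmetric [CompleteSpace E] {S B : E →L[ℝ] E}
    (hS : (S : E →ₗ[ℝ] E).IsSymmetric) (hB : B.IsPositive) : (S * B * S).IsPositive := by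
  have h := hB.conj_adjoint S
  rwa [(ContinuousLinearMap.isSelfAdjoint_iff_isSymmetric.mpr hS).adjoint_eq] at h

variable [FiniteDimensional ℝ E]

lemma isUnit_of_inner_pos {T : E →L[ℝ] E} (hT : ∀ u ≠ 0, 0 < ⟪T u, u⟫) : IsUnit T := by
  have hinj : Function.Injective (T : E →ₗ[ℝ] E) := injective_of_inner_pos hT
  exact ContinuousLinearMap.isUnit_iff_bijective.mpr
    ⟨hinj, LinearMap.injective_iff_surjective.mp hinj⟩

lemma inner_inverse_pos {T : E →L[ℝ] E} (hT : ∀ u ≠ 0, 0 < ⟪T u, u⟫) :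
    ∀ u ≠ 0, 0 < ⟪Ring.inverse T u, u⟫ := fun u hu => by
  have happly := apply_inverse_apply (isUnit_of_inner_pos hT) u
  have hne : Ring.inverse T u ≠ 0 := fun h => hu (by rw [← happly, h, map_zero])
  simpa only [happly, real_inner_comm] using hT _ hne

lemma isPositive_inverse {T : E →L[ℝ] E} (hsymm : (T : E →ₗ[ℝ] E).IsSymmetric)
    (hT : ∀ u ≠ 0, 0 < ⟪T u, u⟫) : (Ring.inverse T).IsPositive :=
  ⟨isSymmetric_inverse hsymm (isUnit_of_inner_pos hT),
    inner_map_self_nonneg (inner_inverse_pos hT)⟩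

end InverseOperators

section DerivativesOfOperators

variable {F G H : Type*} [NormedAddCommGroup F] [NormedSpace ℝ F] [NormedAddCommGroup G]
  [NormedSpace ℝ G] [NormedAddCommGroup H] [NormedSpace ℝ H] {x : F}

lemma map_fderiv_eq_of_eventually_map_eq {A : F → G} {L L' : G →L[ℝ] H}
    (hA : DifferentiableAt ℝ A x) (h : ∀ᶠ y in 𝓝 x, L (A y) = L' (A y)) (v : F) :
    L (fderiv ℝ A x v) = L' (fderiv ℝ A x v) := by
  have hderiv := (L.hasFDerivAt.comp x hA.hasFDerivAt).unique
    ((L'.hasFDerivAt.comp x hA.hasFDerivAt).congr_of_eventuallyEq h)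
  exact congrArg (· v) hderiv

lemma fderiv_flip_of_eventually_flip {A : F → G →L[ℝ] G →L[ℝ] H} (hA : DifferentiableAt ℝ A x)
    (h : ∀ᶠ y in 𝓝 x, ∀ u w, A y u w = A y w u) (v : F) (u w : G) :
    fderiv ℝ A x v u w = fderiv ℝ A x v w u := by
  have hflip := map_fderiv_eq_of_eventually_map_eq (A := A) (L' := .id ℝ _)
    (L := (ContinuousLinearMap.flipₗᵢ ℝ G G H).toContinuousLinearEquiv) hA
    (h.mono fun y hy => by ext u w; exact hy w u) v
  exact congrArg (fun L : G →L[ℝ] G →L[ℝ] H => L w u) hflip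

lemma isSymmetric_fderiv_apply {E : Type*} [NormedAddCommGroup E] [InnerProductSpace ℝ E]
    {A : F → E →L[ℝ] E} (hA : DifferentiableAt ℝ A x)
    (h : ∀ᶠ y in 𝓝 x, (A y : E →ₗ[ℝ] E).IsSymmetric) (v : F) :
    (fderiv ℝ A x v : E →ₗ[ℝ] E).IsSymmetric := fun u w => by
  have hinner := map_fderiv_eq_of_eventually_map_eq
    (L := innerSL ℝ w ∘L .apply ℝ E u) (L' := innerSL ℝ u ∘L .apply ℝ E w) hA
    (h.mono fun y hy => (real_inner_comm _ _).trans (hy u w)) v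
  exact (real_inner_comm _ _).trans hinner

lemma isSymmetric_fderiv_fderiv_apply {E : Type*} [NormedAddCommGroup E] [InnerProductSpace ℝ E]
    {A : F → E →L[ℝ] E} (hA : ContDiffAt ℝ 2 A x)
    (h : ∀ᶠ y in 𝓝 x, (A y : E →ₗ[ℝ] E).IsSymmetric) (v w : F) :
    (fderiv ℝ (fderiv ℝ A) x v w : E →ₗ[ℝ] E).IsSymmetric := by
  have hA' : DifferentiableAt ℝ (fderiv ℝ A) x :=
    (hA.fderiv_right (m := 1) (by norm_num)).differentiableAt (by simp)
  have hsymm : ∀ᶠ y in 𝓝 x, (fderiv ℝ A y w : E →ₗ[ℝ] E).IsSymmetric := by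
    filter_upwards [hA.eventually (by simp), h.eventually_nhds] with y hy hyA
    exact isSymmetric_fderiv_apply (hy.differentiableAt (by simp)) hyA w
  have hw := isSymmetric_fderiv_apply (hA'.clm_apply (differentiableAt_const w)) hsymm v
  rw [fderiv_clm_apply hA' (differentiableAt_const w)] at hw
  simpa using hw

end DerivativesOfOperators

section ConstantDeterminant

variable {E F : Type*} [NormedAddCommGroup E] [NormedSpace ℝ E] [FiniteDimensional ℝ E]
  [NormedAddCommGroup F] [NormedSpace ℝ F] {A : F → E →L[ℝ] E} {U : Set F} {x : F}

lemma trace_inverse_mul_fderiv_eq_zero (hA : DifferentiableAt ℝ A x) (hx : IsUnit (A x))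
    (hdet : ∀ᶠ y in 𝓝 x, (A y).det = (A x).det) (v : F) :
    LinearMap.trace ℝ E (Ring.inverse (A x) * fderiv ℝ A x v : E →L[ℝ] E) = 0 := by
  have hline : HasDerivAt (fun r : ℝ => A (x + r • v)) (fderiv ℝ A x v) 0 :=
    hasDerivAt_line (by simpa using hA.hasFDerivAt)
  simpa using trace_inverse_mul_eq_zero_of_det_eventually_const hline (by simpa using hx)
    (by simpa using (tendsto_add_smul x v).eventually hdet)

lemma trace_inverse_mul_fderiv_fderiv_eq (hU : IsOpen U) (hA : ContDiffOn ℝ 2 A U) (hx : x ∈ U)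
    (hunit : IsUnit (A x)) (hdet : ∀ y ∈ U, (A y).det = (A x).det) (v : F) :
    LinearMap.trace ℝ E (Ring.inverse (A x) * fderiv ℝ (fderiv ℝ A) x v v : E →L[ℝ] E) =
      LinearMap.trace ℝ E (Ring.inverse (A x) *
        (fderiv ℝ A x v * Ring.inverse (A x) * fderiv ℝ A x v) : E →L[ℝ] E) := by
  have hdetline : ∀ᶠ r : ℝ in 𝓝 0, (A (x + r • v)).det = (A (x + (0 : ℝ) • v)).det := by
    filter_upwards [eventually_add_smul_mem hU hx v] with r hr
    rw [zero_smul, add_zero, hdet _ hr]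
  have htrace := trace_inverse_mul_second_deriv_of_det_eventually_const
    (eventually_hasDerivAt_line hU (hA.differentiableOn (by simp)) hx v)
    (hasDerivAt_fderiv_line hU hA hx v) (by rwa [zero_smul, add_zero]) hdetline
  simpa only [zero_smul, add_zero] using htrace

end ConstantDeterminant

section Rigidity

variable {E : Type*} [NormedAddCommGroup E] [InnerProductSpace ℝ E]

lemma apply_comp_apply_eq_of_diagonal {E : Type*} [NormedAddCommGroup E] [NormedSpace ℝ E]
    {T : E →L[ℝ] E →L[ℝ] E} {Q : E →L[ℝ] E →L[ℝ] E →L[ℝ] E} {B : E →L[ℝ] E}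
    (hT : ∀ v w, T v w = T w v) (hQ : ∀ v w, Q v w = Q w v) (hQ' : ∀ v w c, Q v w c = Q v c w)
    (hdiag : ∀ v, Q v v = T v * B * T v) (v : E) : T v * B * T v = T (B (T v v)) := by
  ext w
  have hpolar : Q v w v + Q v w v = T v (B (T w v)) + T w (B (T v v)) := by
    have h := congrArg (· v) (hdiag (v + w))
    have hv := congrArg (· v) (hdiag v)
    have hw := congrArg (· v) (hdiag w)
    simp only [map_add, _root_.add_apply, mul_apply_eq_comp] at h hv hw
    rw [hQ w v, hv, hw] at h
    rw [← sub_eq_zero] at h ⊢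
    rw [← h]
    abel
  rw [hQ' v w v, hdiag v, hT w v, hT w (B (T v v))] at hpolar
  exact add_left_cancel hpolar

lemma eq_zero_of_trace_comp_apply_eq_zero [FiniteDimensional ℝ E] {T : E →L[ℝ] E →L[ℝ] E}
    {B : E →L[ℝ] E} (hsymm : ∀ v, (T v : E →ₗ[ℝ] E).IsSymmetric) (hB : B.IsPositive)
    (hpos : ∀ u ≠ 0, 0 < ⟪B u, u⟫)
    (htrace : ∀ v, LinearMap.trace ℝ E (B * T v : E →L[ℝ] E) = 0)
    (hconj : ∀ v, T v * B * T v = T (B (T v v))) : T = 0 := by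
  ext v c
  have hzero : ((T v * B * T v : E →L[ℝ] E) : E →ₗ[ℝ] E) = 0 :=
    eq_zero_of_trace_comp_eq_zero hpos (isPositive_conj_of_isSymmetric (hsymm v) hB)
      (by rw [hconj]; exact htrace _)
  by_contra hne
  have hinner : ⟪B (T v c), T v c⟫ = 0 := by
    have happly : T v (B (T v c)) = 0 := congrArg (· c) hzero
    exact (hsymm v (B (T v c)) c).symm.trans (by simp [happly])
  exact (hpos _ hne).ne' hinner

variable {U : Set E} {K : E → ℝ} {g : E → E} {θ : E}

lemma isSymmetric_fderiv_of_hasGradientAt [CompleteSpace E] (hU : IsOpen U)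
    (hg : ∀ θ ∈ U, HasGradientAt K (g θ) θ) (hgU : DifferentiableOn ℝ g U) (hθ : θ ∈ U) :
    (fderiv ℝ g θ : E →ₗ[ℝ] E).IsSymmetric :=
  isSymmetric_of_hasFDerivAt_of_hasGradientAt (eventually_of_mem (hU.mem_nhds hθ) hg)
    (hgU.differentiableAt (hU.mem_nhds hθ)).hasFDerivAt

variable [FiniteDimensional ℝ E]

lemma ConditionallyPositiveOn.fderiv_fderiv_fderiv_eq_of_det_const
    (hK : ConditionallyPositiveOn U K) (hU : IsOpen U) (hg : ∀ θ ∈ U, HasGradientAt K (g θ) θ)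
    (hgU : ContDiffOn ℝ 3 g U) (hθ : θ ∈ U) (hpos : ∀ u ≠ 0, 0 < ⟪fderiv ℝ g θ u, u⟫)
    (hdet : ∀ η ∈ U, (fderiv ℝ g η).det = (fderiv ℝ g θ).det) (v : E) :
    fderiv ℝ (fderiv ℝ (fderiv ℝ g)) θ v v =
      fderiv ℝ (fderiv ℝ g) θ v * Ring.inverse (fderiv ℝ g θ) * fderiv ℝ (fderiv ℝ g) θ v := by
  have hsymm (η) (hη : η ∈ U) := isSymmetric_fderiv_of_hasGradientAt hU hg
    (hgU.differentiableOn (by simp)) hη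
  have hsymm_nhds := eventually_of_mem (hU.mem_nhds hθ) hsymm
  have hg2 : ContDiffOn ℝ 2 (fderiv ℝ g) U := hgU.fderiv_of_isOpen hU (by norm_num)
  have hg2θ := hg2.contDiffAt (hU.mem_nhds hθ)
  have hunit := isUnit_of_inner_pos hpos
  have htrace := trace_inverse_mul_fderiv_fderiv_eq hU hg2 hθ hunit hdet v
  set B := Ring.inverse (fderiv ℝ g θ)
  set T := fderiv ℝ (fderiv ℝ g) θ
  set Q := fderiv ℝ (fderiv ℝ (fderiv ℝ g)) θ
  have hB : B.IsPositive := isPositive_inverse (hsymm θ hθ) hpos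
  have hP : (Q v v - T v * B * T v).IsPositive := by
    refine ⟨(isSymmetric_fderiv_fderiv_apply hg2θ hsymm_nhds v v).sub
      (isPositive_conj_of_isSymmetric
        (isSymmetric_fderiv_apply (hg2θ.differentiableAt (by simp)) hsymm_nhds v) hB).isSymmetric,
      fun c => ?_⟩
    have hle := hK.inner_fderiv_comp_le hU hg hgU hθ (apply_inverse_apply hunit) v c
    exact (sub_nonneg.mpr hle).trans_eq (inner_sub_left _ _ _).symm
  have hzero := eq_zero_of_trace_comp_eq_zero (inner_inverse_pos hpos) hP <| by
    have hsub : LinearMap.trace ℝ E (B * (Q v v - T v * B * T v) : E →L[ℝ] E) = 0 := by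
      rw [mul_sub, ContinuousLinearMap.toLinearMap_sub, map_sub, htrace, sub_self]
    exact hsub
  exact sub_eq_zero.mp (ContinuousLinearMap.coe_injective hzero)

theorem ConditionallyPositiveOn.fderiv_fderiv_eq_zero_of_det_const
    (hK : ConditionallyPositiveOn U K) (hU : IsOpen U) (hg : ∀ θ ∈ U, HasGradientAt K (g θ) θ)
    (hgU : ContDiffOn ℝ 3 g U) (hθ : θ ∈ U) (hpos : ∀ u ≠ 0, 0 < ⟪fderiv ℝ g θ u, u⟫)
    (hdet : ∀ η ∈ U, (fderiv ℝ g η).det = (fderiv ℝ g θ).det) :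
    fderiv ℝ (fderiv ℝ g) θ = 0 := by
  have hsymm (η) (hη : η ∈ U) := isSymmetric_fderiv_of_hasGradientAt hU hg
    (hgU.differentiableOn (by simp)) hη
  have hU_nhds := hU.mem_nhds hθ
  have hg2 : ContDiffAt ℝ 2 (fderiv ℝ g) θ :=
    (hgU.contDiffAt hU_nhds).fderiv_right (by norm_num)
  have hunit := isUnit_of_inner_pos hpos
  have hcomm (η) (hη : η ∈ U) (v w) :
      fderiv ℝ (fderiv ℝ g) η v w = fderiv ℝ (fderiv ℝ g) η w v :=
    (hgU.contDiffAt (hU.mem_nhds hη)).isSymmSndFDerivAt (by norm_num) v w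
  refine eq_zero_of_trace_comp_apply_eq_zero
    (isSymmetric_fderiv_apply (hg2.differentiableAt (by simp)) (eventually_of_mem hU_nhds hsymm))
    (isPositive_inverse (hsymm θ hθ) hpos) (inner_inverse_pos hpos)
    (trace_inverse_mul_fderiv_eq_zero (hg2.differentiableAt (by simp)) hunit
      (eventually_of_mem hU_nhds hdet))
    (apply_comp_apply_eq_of_diagonal (hcomm θ hθ) (hg2.isSymmSndFDerivAt (by simp))
      (fderiv_flip_of_eventually_flip ?_ (eventually_of_mem hU_nhds hcomm))
      (hK.fderiv_fderiv_fderiv_eq_of_det_const hU hg hgU hθ hpos hdet))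
  exact (hg2.fderiv_right (m := 1) (by norm_num)).differentiableAt (by simp)

end Rigidity

section RightInverses

variable {E : Type*} [NormedAddCommGroup E] [NormedSpace ℝ E] {G g : E → E} {θ : E}

lemma exists_contDiffOn_right_inverse [CompleteSpace E] {n : WithTop ℕ∞} (hG : ContDiff ℝ n G)
    (hn : n ≠ 0) (hunit : ∀ x, IsUnit (fderiv ℝ G x)) (x₀ : E) :
    ∃ (U : Set E) (g : E → E), IsOpen U ∧ G x₀ ∈ U ∧ g (G x₀) = x₀ ∧ ContDiffOn ℝ n g U ∧
      ∀ θ ∈ U, G (g θ) = θ := by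
  have hd (x) : HasFDerivAt G (ContinuousLinearEquiv.ofUnit (hunit x).unit : E →L[ℝ] E) x :=
    (hG.differentiable hn x).hasFDerivAt
  have hG₀ := hG.contDiffAt (x := x₀)
  let Φ := hG₀.toOpenPartialHomeomorph G (hd x₀) hn
  exact ⟨Φ.target, Φ.symm, Φ.open_target,
    hG₀.image_mem_toOpenPartialHomeomorph_target (hd x₀) hn,
    Φ.left_inv (hG₀.mem_toOpenPartialHomeomorph_source (hd x₀) hn),
    fun θ hθ => (Φ.contDiffAt_symm hθ (hd _) hG.contDiffAt).contDiffWithinAt,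
    fun θ hθ => Φ.right_inv hθ⟩

lemma fderiv_mul_fderiv_eq_one_of_right_inverse (hG : DifferentiableAt ℝ G (g θ))
    (hg : DifferentiableAt ℝ g θ) (h : ∀ᶠ η in 𝓝 θ, G (g η) = η) :
    fderiv ℝ G (g θ) * fderiv ℝ g θ = 1 :=
  (hG.hasFDerivAt.comp θ hg.hasFDerivAt).unique ((hasFDerivAt_id θ).congr_of_eventuallyEq h)

lemma fderiv_eq_inverse_of_right_inverse (hG : DifferentiableAt ℝ G (g θ))
    (hg : DifferentiableAt ℝ g θ) (h : ∀ᶠ η in 𝓝 θ, G (g η) = η)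
    (hunit : IsUnit (fderiv ℝ G (g θ))) : fderiv ℝ g θ = Ring.inverse (fderiv ℝ G (g θ)) := by
  rw [← Ring.inverse_mul_cancel_left _ (fderiv ℝ g θ) hunit,
    fderiv_mul_fderiv_eq_one_of_right_inverse hG hg h, mul_one]

lemma fderiv_fderiv_eq_zero_of_right_inverse (hG : ContDiffAt ℝ 2 G (g θ))
    (hg : ContDiffAt ℝ 2 g θ) (h : ∀ᶠ η in 𝓝 θ, G (g η) = η)
    (hunit : IsUnit (fderiv ℝ G (g θ))) (hzero : fderiv ℝ (fderiv ℝ g) θ = 0) :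
    fderiv ℝ (fderiv ℝ G) (g θ) = 0 := by
  have hfderiv {F : E → E} {x : E} (hF : ContDiffAt ℝ 2 F x) :
      DifferentiableAt ℝ (fderiv ℝ F) x :=
    (hF.fderiv_right (m := 1) (by norm_num)).differentiableAt (by simp)
  have hgθ := hg.differentiableAt (by simp)
  have hone : (fun η => (fderiv ℝ G (g η)).comp (fderiv ℝ g η)) =ᶠ[𝓝 θ] fun _ => 1 := by
    filter_upwards [h.eventually_nhds, hg.eventually (by simp),
      hgθ.continuousAt.eventually (hG.eventually (by simp))] with η hη hgη hGη
    exact fderiv_mul_fderiv_eq_one_of_right_inverse (hGη.differentiableAt (by simp))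
      (hgη.differentiableAt (by simp)) hη
  have hprod := (((hfderiv hG).hasFDerivAt.comp θ hgθ.hasFDerivAt).clm_comp
    (hfderiv hg).hasFDerivAt).unique ((hasFDerivAt_const _ θ).congr_of_eventuallyEq hone)
  have hsurj (u : E) : ∃ v, fderiv ℝ g θ v = u := by
    rw [fderiv_eq_inverse_of_right_inverse (hG.differentiableAt (by simp)) hgθ h hunit]
    exact ⟨fderiv ℝ G (g θ) u, congrArg (· u) (Ring.inverse_mul_cancel _ hunit)⟩
  ext w u
  obtain ⟨w, rfl⟩ := hsurj w
  obtain ⟨u, rfl⟩ := hsurj u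
  simpa [hzero] using congrArg (fun L : E →L[ℝ] E →L[ℝ] E => L w u) hprod

end RightInverses

section ConstantHessian

lemma eq_add_map_of_hasFDerivAt_const {E F : Type*} [NormedAddCommGroup E] [NormedSpace ℝ E]
    [NormedAddCommGroup F] [NormedSpace ℝ F] {G : E → F} {T : E →L[ℝ] F}
    (hG : ∀ x, HasFDerivAt G T x) (x : E) : G x = G 0 + T x := by
  have hd (y) : HasFDerivAt (fun y => G y - T y) (0 : E →L[ℝ] F) y := by
    simpa using (hG y).fun_sub T.hasFDerivAt
  have h := is_const_of_fderiv_eq_zero (fun y => (hd y).differentiableAt) (fun y => (hd y).fderiv)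
    x 0
  rwa [map_zero, sub_zero, sub_eq_iff_eq_add] at h

variable {E : Type*} [NormedAddCommGroup E] [InnerProductSpace ℝ E]

lemma fderiv_fderiv_gradient_eq_zero [FiniteDimensional ℝ E] [MeasurableSpace E] [BorelSpace E]
    {μ : Measure E} [μ.IsAddHaarMeasure] {f : E → ℝ} (hf : ContDiff ℝ 4 f)
    (hconv : ConvexOn ℝ Set.univ f)
    (hpos : ∀ x, ∀ u ≠ 0, 0 < ⟪fderiv ℝ (gradient f) x u, u⟫)
    (hlaplace : ∀ x x' t, 0 < t → ∫ y, Real.exp (-(t * bregman f x y)) ∂μ =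
      ∫ y, Real.exp (-(t * bregman f x' y)) ∂μ) (x : E) :
    fderiv ℝ (fderiv ℝ (gradient f)) x = 0 := by
  have hf2 : ContDiff ℝ 2 f := hf.of_le (by norm_num)
  have hgrad : ContDiff ℝ 3 (gradient f) := contDiff_gradient hf (by norm_num)
  have hunit (y) := isUnit_of_inner_pos (hpos y)
  have hdet (y y') : (fderiv ℝ (gradient f) y).det = (fderiv ℝ (gradient f) y').det :=
    det_fderiv_gradient_congr hf2 hconv (hpos y) (hpos y') (hlaplace y y')
  obtain ⟨U, g, hU, hθ, hgθ, hgU, hright⟩ :=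
    exists_contDiffOn_right_inverse hgrad (by simp) hunit x
  set θ := gradient f x
  have hgdiff (η) (hη : η ∈ U) : DifferentiableAt ℝ g η :=
    (hgU.differentiableOn (by simp)).differentiableAt (hU.mem_nhds hη)
  have hinverse (η) (hη : η ∈ U) :
      fderiv ℝ g η = Ring.inverse (fderiv ℝ (gradient f) (g η)) :=
    fderiv_eq_inverse_of_right_inverse (hgrad.differentiable (by simp) _) (hgdiff η hη)
      (eventually_of_mem (hU.mem_nhds hη) hright) (hunit _)
  have hzero : fderiv ℝ (fderiv ℝ g) θ = 0 := by
    refine (conditionallyPositiveOn_legendreVia hright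
      (fun y t => integrable_exp_neg_bregman (μ := μ) hf2 hconv (hpos y)) hlaplace
      ).fderiv_fderiv_eq_zero_of_det_const hU (fun η hη => hasGradientAt_legendreVia
        (hf.differentiable (by simp) _) (hgdiff η hη) (hright η hη)) hgU hθ ?_ fun η hη => ?_
    · rw [hinverse θ hθ]
      exact inner_inverse_pos (hpos _)
    · rw [hinverse η hη, hinverse θ hθ, det_ringInverse (hunit _), det_ringInverse (hunit _), hdet]
  rw [← hgθ]
  exact fderiv_fderiv_eq_zero_of_right_inverse (hgrad.contDiffAt.of_le (by norm_num))
    ((hgU.contDiffAt (hU.mem_nhds hθ)).of_le (by norm_num))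
    (eventually_of_mem (hU.mem_nhds hθ) hright) (hunit _) hzero

lemma eq_quadratic_of_hasFDerivAt_gradient [CompleteSpace E] {f : E → ℝ}
    (hf : Differentiable ℝ f) {T : E →L[ℝ] E} (hT : ∀ x, HasFDerivAt (gradient f) T x) (x : E) :
    f x = ⟪T x, x⟫ / 2 + ⟪gradient f 0, x⟫ + f 0 := by
  have hd (r : ℝ) : HasDerivAt (fun r : ℝ => f (0 + r • x) -
      (⟪T x, x⟫ / 2 * r ^ 2 + ⟪gradient f 0, x⟫ * r)) 0 r := by
    refine ((hasDerivAt_line_inner (hf _).hasGradientAt).fun_sub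
      (((hasDerivAt_pow 2 r).const_mul (⟪T x, x⟫ / 2)).fun_add
        ((hasDerivAt_id' r).const_mul ⟪gradient f 0, x⟫))).congr_deriv ?_
    rw [eq_add_map_of_hasFDerivAt_const hT, zero_add, map_smul, inner_add_left,
      real_inner_smul_left]
    push_cast
    ring
  have h := is_const_of_deriv_eq_zero (fun r => (hd r).differentiableAt) (fun r => (hd r).deriv)
    1 0
  simp only [one_smul, zero_smul, zero_add] at h
  linarith

end ConstantHessian

section Matrices

variable {n : ℕ}

lemma inner_eq_sum_sum_toEuclideanCLM_symm
    (T : EuclideanSpace ℝ (Fin n) →L[ℝ] EuclideanSpace ℝ (Fin n))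
    (x y : EuclideanSpace ℝ (Fin n)) :
    ⟪x, T y⟫ = ∑ i, ∑ j, (Matrix.toEuclideanCLM (𝕜 := ℝ)).symm T i j * x i * y j := by
  conv_lhs => rw [← StarAlgEquiv.apply_symm_apply (Matrix.toEuclideanCLM (𝕜 := ℝ)) T,
    Matrix.inner_toEuclideanCLM]
  simp only [dotProduct, Matrix.mulVec, Finset.mul_sum]
  exact Finset.sum_congr rfl fun i _ => Finset.sum_congr rfl fun j _ => by ring

lemma posDef_toEuclideanCLM_symm_iff
    {T : EuclideanSpace ℝ (Fin n) →L[ℝ] EuclideanSpace ℝ (Fin n)} :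
    ((Matrix.toEuclideanCLM (𝕜 := ℝ)).symm T).PosDef ↔
      (T : EuclideanSpace ℝ (Fin n) →ₗ[ℝ] EuclideanSpace ℝ (Fin n)).IsSymmetric ∧
        ∀ u ≠ 0, 0 < ⟪T u, u⟫ := by
  obtain ⟨M, rfl⟩ := EquivLike.surjective (Matrix.toEuclideanCLM (n := Fin n) (𝕜 := ℝ)) T
  rw [StarAlgEquiv.symm_apply_apply, Matrix.posDef_iff_dotProduct_mulVec,
    Matrix.coe_toEuclideanCLM_eq_toEuclideanLin, Matrix.isSymmetric_toEuclideanLin_iff]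
  refine and_congr_right fun _ => ⟨fun h u hu => ?_, fun h x hx => ?_⟩
  · rw [real_inner_comm, Matrix.inner_toEuclideanCLM]
    exact h (by simpa using hu)
  · have := h (WithLp.toLp 2 x) (by simpa using hx)
    rwa [real_inner_comm, Matrix.inner_toEuclideanCLM] at this

lemma hessianMatrix_eq_toEuclideanCLM_symm {f : EuclideanSpace ℝ (Fin n) → ℝ}
    (hf : ContDiff ℝ 2 f) (x : EuclideanSpace ℝ (Fin n)) :
    hessianMatrix f x = (Matrix.toEuclideanCLM (𝕜 := ℝ)).symm (fderiv ℝ (gradient f) x) := by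
  ext i j
  have h := inner_eq_sum_sum_toEuclideanCLM_symm (fderiv ℝ (gradient f) x)
    (EuclideanSpace.single i 1) (EuclideanSpace.single j 1)
  have hsymm := isSymmetric_fderiv_gradient hf x (EuclideanSpace.single i 1)
    (EuclideanSpace.single j 1)
  simp only [ContinuousLinearMap.coe_coe, inner_fderiv_gradient] at hsymm
  simpa [hessianMatrix, iteratedFDeriv_two_apply, hsymm] using h

end Matrices

theorem elliptic_paraboloid_of_constant_volume_general {E : Type*} [NormedAddCommGroup E]
    [InnerProductSpace ℝ E] [FiniteDimensional ℝ E] [MeasurableSpace E] [BorelSpace E]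
    {μ : Measure E} [μ.IsAddHaarMeasure] {f : E → ℝ} (hf : ContDiff ℝ 4 f)
    (hconv : ConvexOn ℝ Set.univ f)
    (hpos : ∀ x, ∀ u ≠ 0, 0 < ⟪fderiv ℝ (gradient f) x u, u⟫) {φ : ℝ → ℝ}
    (hV : ∀ x k, 0 < k → ∫ y in {y | f y < f x + ⟪gradient f x, y - x⟫ + k},
      (f x + ⟪gradient f x, y - x⟫ + k - f y) ∂μ = φ k) :
    ∃ (T : E →L[ℝ] E) (b : E) (c : ℝ), (T : E →ₗ[ℝ] E).IsSymmetric ∧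
      (∀ u ≠ 0, 0 < ⟪T u, u⟫) ∧ ∀ x, f x = ⟪T x, x⟫ + ⟪b, x⟫ + c := by
  have hf2 : ContDiff ℝ 2 f := hf.of_le (by norm_num)
  have hgrad : ContDiff ℝ 2 (gradient f) := contDiff_gradient hf (by norm_num)
  have hthird := fderiv_fderiv_gradient_eq_zero hf hconv hpos fun x x' t =>
    integral_exp_neg_bregman_congr hf2 hconv hpos hV x x'
  have hconst (x) : HasFDerivAt (gradient f) (fderiv ℝ (gradient f) 0) x := by
    rw [← is_const_of_fderiv_eq_zero ((hgrad.fderiv_right (m := 1) (by norm_num)).differentiable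
      (by simp)) hthird x 0]
    exact (hgrad.differentiable (by simp) x).hasFDerivAt
  refine ⟨(2⁻¹ : ℝ) • fderiv ℝ (gradient f) 0, gradient f 0, f 0,
    (isSymmetric_fderiv_gradient hf2 0).smul (by simp), fun u hu => ?_, fun x => ?_⟩
  · simpa [real_inner_smul_left] using hpos 0 u hu
  · rw [eq_quadratic_of_hasFDerivAt_gradient (hf.differentiable (by simp)) hconst x,
      _root_.smul_apply, real_inner_smul_left, inv_mul_eq_div]

theorem elliptic_paraboloid_of_constant_volume (n : ℕ) (hn : 1 ≤ n)
    (f : EuclideanSpace ℝ (Fin n) → ℝ)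
    (hf : ContDiff ℝ (⊤ : ℕ∞) f) (hconv : ConvexOn ℝ Set.univ f)
    (hhess : ∀ x, (hessianMatrix f x).PosDef)
    (φ : ℝ → ℝ) (hφ : ∀ k, 0 < k → 0 ≤ φ k)
    (hV : ∀ (x : EuclideanSpace ℝ (Fin n)) (k : ℝ), 0 < k →
      (∫ y in {y | f y < f x + ⟪gradient f x, y - x⟫ + k},
        (f x + ⟪gradient f x, y - x⟫ + k - f y)) = φ k) :
    ∃ (A : Matrix (Fin n) (Fin n) ℝ) (b : EuclideanSpace ℝ (Fin n)) (c : ℝ),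
      A.PosDef ∧ ∀ x, f x = (∑ i, ∑ j, A i j * x i * x j) + (∑ i, b i * x i) + c := by
  have hf4 : ContDiff ℝ 4 f := mod_cast contDiff_infty.mp hf 4
  have hpos (x) : ∀ u ≠ 0, 0 < ⟪fderiv ℝ (gradient f) x u, u⟫ := by
    have hx := hhess x
    rw [hessianMatrix_eq_toEuclideanCLM_symm (hf4.of_le (by norm_num))] at hx
    exact (posDef_toEuclideanCLM_symm_iff.mp hx).2
  obtain ⟨T, b, c, hsymm, hT, hquad⟩ :=
    elliptic_paraboloid_of_constant_volume_general hf4 hconv hpos hV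
  refine ⟨(Matrix.toEuclideanCLM (𝕜 := ℝ)).symm T, b, c,
    posDef_toEuclideanCLM_symm_iff.mpr ⟨hsymm, hT⟩, fun x => ?_⟩
  rw [hquad, real_inner_comm, inner_eq_sum_sum_toEuclideanCLM_symm]
  simp [PiLp.inner_apply, mul_comm]
end
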